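/- arXiv:math/0308280 — 3 statements merged into one kernel-verified Lean document; each statement's English description precedes it below -/
import Mathlib

section
/- For every m ≥ 2 and every n ≥ binom(m,2)·2^{m−2}, the toric ideal I_{K_{m,n}} of the complete bipartite graph K_{m,n} is not generated in degree ≤ 2^{m−1} − 1; that is, I_{K_{m,n}} has a minimal generator of degree 2^{m−1} and the Markov width satisfies μ(K_{m,n}) ≥ 2^{m−1}. -/
open MvPolynomial Finset

namespace BinaryGraphModels

variable {V : Type} [Fintype V] [DecidableEq V]

/-- The monomial map `φ_G` of the binary graph model: the variable `p_I` is sent to the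
product over edges `{j,k}` of the variable `t^{jk}_{I(j)I(k)}` (encoded as the unordered pair
`{(j, I j), (k, I k)}`) times the product over isolated vertices `l` of `t^{l}_{I(l)}`. -/
noncomputable def phi (G : SimpleGraph V) :
    MvPolynomial (V → Bool) ℂ →ₐ[ℂ] MvPolynomial (Sym2 (V × Bool) ⊕ (V × Bool)) ℂ := by
  letI : DecidableRel G.Adj := Classical.decRel _
  exact aeval fun I : V → Bool =>
    (∏ e ∈ G.edgeFinset,
      (X (Sum.inl (Sym2.map (fun v => (v, I v)) e)) :
        MvPolynomial (Sym2 (V × Bool) ⊕ (V × Bool)) ℂ)) *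
    ∏ l ∈ univ.filter (fun l : V => ∀ k, ¬ G.Adj l k), X (Sum.inr (l, I l))

/-- The toric ideal `I_G` of the binary graph model of `G`. -/
noncomputable def toricIdeal (G : SimpleGraph V) : Ideal (MvPolynomial (V → Bool) ℂ) :=
  RingHom.ker (phi G).toRingHom

/-- `I_G` is generated in degree at most `d`. -/
def GenInDegLE (G : SimpleGraph V) (d : ℕ) : Prop :=
  toricIdeal G =
    Ideal.span {f : MvPolynomial (V → Bool) ℂ | f ∈ toricIdeal G ∧ f.totalDegree ≤ d}

/-- The Markov width `μ(G)`: the least `d` such that `I_G` is generated in degree `≤ d`. -/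
noncomputable def markovWidth (G : SimpleGraph V) : ℕ :=
  sInf {d : ℕ | GenInDegLE G d}

/-- `f` is a minimal generator of `I_G`, i.e. `f ∈ I_G` and `f ∉ 𝔪 · I_G` where `𝔪` is the
irrelevant maximal ideal generated by all the variables. -/
def IsMinimalGenerator (G : SimpleGraph V) (f : MvPolynomial (V → Bool) ℂ) : Prop :=
  f ∈ toricIdeal G ∧
    f ∉ Ideal.span (Set.range (X : (V → Bool) → MvPolynomial (V → Bool) ℂ)) * toricIdeal G

/-- Two integer tables have the same `G`-marginals: equal two-way marginals along every edge
and equal one-way marginals at every isolated vertex. -/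
def MarginalsEq (G : SimpleGraph V) (v₁ v₂ : (V → Bool) → ℤ) : Prop :=
  (∀ j k : V, G.Adj j k → ∀ a b : Bool,
    (∑ I : V → Bool, if I j = a ∧ I k = b then v₁ I else 0) =
    (∑ I : V → Bool, if I j = a ∧ I k = b then v₂ I else 0)) ∧
  (∀ l : V, (∀ k, ¬ G.Adj l k) → ∀ a : Bool,
    (∑ I : V → Bool, if I l = a then v₁ I else 0) =
    (∑ I : V → Bool, if I l = a then v₂ I else 0))

/-- `B` is a Markov basis for `G`: any two nonnegative tables with the same `G`-marginals are
connected by a path of moves from `±B` staying nonnegative. -/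
def IsMarkovBasis (G : SimpleGraph V) (B : Finset ((V → Bool) → ℤ)) : Prop :=
  ∀ v₁ v₂ : (V → Bool) → ℤ, (∀ I, 0 ≤ v₁ I) → (∀ I, 0 ≤ v₂ I) →
    MarginalsEq G v₁ v₂ →
    ∃ L : List ((V → Bool) → ℤ),
      (∀ u ∈ L, u ∈ B ∨ -u ∈ B) ∧
      v₁ + L.sum = v₂ ∧
      ∀ n : ℕ, n ≤ L.length → ∀ I, 0 ≤ (v₁ + (L.take n).sum) I

/-- The binomial `p^{u⁺} - p^{u⁻}` associated to an integer table `u`. -/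
noncomputable def moveBinomial (u : (V → Bool) → ℤ) : MvPolynomial (V → Bool) ℂ :=
  (∏ I : V → Bool, X I ^ (u I).toNat) - ∏ I : V → Bool, X I ^ (-u I).toNat

end BinaryGraphModels

namespace BinaryGraphModels


section General

variable {σ τ : Type} [Fintype σ] [DecidableEq σ]

/-- Exponent map of a monomial map. -/
noncomputable def expMap (a : σ → (τ →₀ ℕ)) (s : σ →₀ ℕ) : τ →₀ ℕ := ∑ i, s i • a i

theorem expMap_add (a : σ → (τ →₀ ℕ)) (s t : σ →₀ ℕ) :
    expMap a (s + t) = expMap a s + expMap a t := by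
  simp [expMap, add_smul, Finset.sum_add_distrib]

theorem map_monomial_eq (φ : MvPolynomial σ ℂ →ₐ[ℂ] MvPolynomial τ ℂ) (a : σ → (τ →₀ ℕ))
    (h : ∀ i, φ (X i) = monomial (a i) 1) (s : σ →₀ ℕ) (c : ℂ) :
    φ (monomial s c) = monomial (expMap a s) c := by
  rw [MvPolynomial.monomial_eq, map_mul, Finsupp.prod_fintype _ _ (by simp), map_prod]
  simp only [map_pow, h, monomial_pow, one_pow]
  have : φ (C c) = C c := by
    rw [← algebraMap_eq, AlgHom.commutes]; rfl
  rw [this, ← MvPolynomial.monomial_sum_one, C_mul_monomial, mul_one]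
  rfl

theorem coeff_eq_zero_of_fiber (φ : MvPolynomial σ ℂ →ₐ[ℂ] MvPolynomial τ ℂ)
    (a : σ → (τ →₀ ℕ)) (h : ∀ i, φ (X i) = monomial (a i) 1) (s : σ →₀ ℕ)
    (hs : ∀ t, expMap a t = expMap a s → t = s) (g : MvPolynomial σ ℂ) (hg : φ g = 0) :
    coeff s g = 0 := by
  classical
  have h1 : coeff (expMap a s) (φ g) = coeff s g := by
    conv_lhs => rw [g.as_sum]
    rw [map_sum, coeff_sum]
    simp only [map_monomial_eq φ a h, coeff_monomial]
    have : ∀ x ∈ g.support, (if expMap a x = expMap a s then coeff x g else 0) =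
        if x = s then coeff x g else 0 := by
      intro x _
      by_cases hx : x = s
      · simp [hx]
      · rw [if_neg hx, if_neg (fun h => hx (hs x h))]
    rw [Finset.sum_congr rfl this, Finset.sum_ite_eq']
    simp only [mem_support_iff, ne_eq, ite_not]
    split_ifs with h0
    · exact h0.symm
    · rfl
  rw [← h1, hg, coeff_zero]

theorem coeff_X_mul_eq_zero (φ : MvPolynomial σ ℂ →ₐ[ℂ] MvPolynomial τ ℂ)
    (a : σ → (τ →₀ ℕ)) (h : ∀ i, φ (X i) = monomial (a i) 1) (u v : σ →₀ ℕ)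
    (hfib : ∀ t, expMap a t = expMap a u → t = u ∨ t = v)
    (hdisj : ∀ i, u i ≠ 0 → v i = 0) (g : MvPolynomial σ ℂ) (hg : φ g = 0) (i : σ) :
    coeff u (X i * g) = 0 := by
  classical
  rw [coeff_X_mul']
  split_ifs with hi
  · have hui : u i ≠ 0 := by simpa using hi
    have hle : Finsupp.single i 1 ≤ u := by
      rw [Finsupp.single_le_iff]; omega
    have hu : u - Finsupp.single i 1 + Finsupp.single i 1 = u := tsub_add_cancel_of_le hle
    apply coeff_eq_zero_of_fiber φ a h _ _ g hg
    intro t ht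
    have h2 : expMap a (t + Finsupp.single i 1) = expMap a u := by
      rw [expMap_add, ht, ← expMap_add, hu]
    rcases hfib _ h2 with h3 | h3
    · rw [← h3]; simp
    · have := hdisj i hui
      rw [← h3] at this
      simp at this
  · rfl

end General

/-- The abstract consequence: two-element disjoint fiber gives the conclusion. -/
theorem conclusion_of_fiber {V : Type} [Fintype V] [DecidableEq V] (G : SimpleGraph V) (D : ℕ)
    (a : (V → Bool) → (Sym2 (V × Bool) ⊕ (V × Bool) →₀ ℕ))
    (h : ∀ i, phi G (X i) = monomial (a i) 1) (u v : (V → Bool) →₀ ℕ)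
    (huv : expMap a v = expMap a u)
    (hfib : ∀ t, expMap a t = expMap a u → t = u ∨ t = v)
    (hdisj : ∀ i, u i ≠ 0 → v i = 0)
    (hu : u.degree = D) (hv : v.degree = D) (hD : 0 < D) :
    ¬ GenInDegLE G (D - 1) ∧
    (∃ f : MvPolynomial (V → Bool) ℂ, IsMinimalGenerator G f ∧ f.totalDegree = D) ∧
    D ≤ markovWidth G := by
  classical
  have hmem : ∀ g, g ∈ toricIdeal G ↔ phi G g = 0 := by
    intro g; exact RingHom.mem_ker
  have key : ∀ g ∈ toricIdeal G, ∀ i, coeff u (X i * g) = 0 := fun g hg i =>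
    coeff_X_mul_eq_zero (phi G) a h u v hfib hdisj g ((hmem g).1 hg) i
  have hne : v ≠ u := by
    rintro rfl
    have : v = 0 := by
      ext i
      by_contra hi
      exact hi (hdisj i hi)
    rw [this] at hu
    simp at hu
    omega
  set f : MvPolynomial (V → Bool) ℂ := monomial u 1 - monomial v 1 with hf
  have hfI : f ∈ toricIdeal G := by
    rw [hmem, hf, map_sub, map_monomial_eq _ a h, map_monomial_eq _ a h, huv, sub_self]
  have hfu : coeff u f = 1 := by
    rw [hf, coeff_sub, coeff_monomial, coeff_monomial, if_pos rfl, if_neg hne, sub_zero]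
  have hfdeg : f.totalDegree = D := by
    have hhom : f.IsHomogeneous D :=
      (isHomogeneous_monomial 1 hu).sub (isHomogeneous_monomial 1 hv)
    apply hhom.totalDegree
    intro h0
    rw [h0] at hfu
    simp at hfu
  have hnot : ∀ d, d < D → ¬ GenInDegLE G d := by
    intro d hd hgen
    have hP : ∀ x ∈ Ideal.span {f : MvPolynomial (V → Bool) ℂ |
        f ∈ toricIdeal G ∧ f.totalDegree ≤ d}, x ∈ toricIdeal G ∧ coeff u x = 0 := by
      intro x hx
      induction hx using Submodule.span_induction with
      | mem x hx =>
        refine ⟨hx.1, ?_⟩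
        apply coeff_eq_zero_of_totalDegree_lt
        have : ∑ i ∈ u.support, u i = D := hu
        have h2 := hx.2
        omega
      | zero => exact ⟨Ideal.zero_mem _, coeff_zero _⟩
      | add x y _ _ hx hy =>
        exact ⟨Ideal.add_mem _ hx.1 hy.1, by rw [coeff_add, hx.2, hy.2, add_zero]⟩
      | smul r x _ hx =>
        refine ⟨Ideal.mul_mem_left _ _ hx.1, ?_⟩
        rw [smul_eq_mul]
        induction r using MvPolynomial.induction_on with
        | C c => rw [coeff_C_mul, hx.2, mul_zero]
        | add p q hp hq => rw [add_mul, coeff_add, hp, hq, add_zero]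
        | mul_X p i _ =>
          rw [mul_comm p, mul_assoc]
          exact key _ (Ideal.mul_mem_left _ _ hx.1) i
    have := (hP f (hgen ▸ hfI)).2
    rw [hfu] at this
    exact one_ne_zero this
  refine ⟨hnot _ (by omega), ⟨f, ⟨hfI, ?_⟩, hfdeg⟩, ?_⟩
  · intro hmemf
    have hQ : ∀ p ∈ Ideal.span (Set.range (X : (V → Bool) → MvPolynomial (V → Bool) ℂ)),
        ∀ g ∈ toricIdeal G, coeff u (p * g) = 0 := by
      intro p hp
      induction hp using Submodule.span_induction with
      | mem x hx =>
        obtain ⟨i, rfl⟩ := hx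
        exact fun g hg => key g hg i
      | zero => intro g _; simp
      | add x y _ _ hx hy =>
        intro g hg
        rw [add_mul, coeff_add, hx g hg, hy g hg, add_zero]
      | smul r x _ hx =>
        intro g hg
        rw [smul_eq_mul, mul_comm r, mul_assoc]
        exact hx _ (Ideal.mul_mem_left _ _ hg)
    have : coeff u f = 0 := by
      refine Submodule.mul_induction_on (C := fun x => coeff u x = 0) hmemf ?_ ?_
      · exact hQ
      · intro x y hx hy
        rw [coeff_add, hx, hy, add_zero]
    rw [hfu] at this
    exact one_ne_zero this
  · have hnonempty : {d : ℕ | GenInDegLE G d}.Nonempty := by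
      obtain ⟨S, hS⟩ := (isNoetherianRing_iff_ideal_fg _).1
        (inferInstance : IsNoetherianRing (MvPolynomial (V → Bool) ℂ)) (toricIdeal G)
      refine ⟨S.sup totalDegree, ?_⟩
      apply le_antisymm
      · conv_lhs => rw [← hS]
        apply Submodule.span_mono
        intro g hg
        refine ⟨?_, Finset.le_sup (f := totalDegree) hg⟩
        rw [← hS]
        exact Submodule.subset_span hg
      · apply Ideal.span_le.2
        intro g hg
        exact hg.1
    by_contra hlt
    exact hnot _ (not_le.1 hlt) (Nat.sInf_mem hnonempty)

/-- Flip a coordinate. -/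
def flip {m : ℕ} (j : Fin m) (x : Fin m → Bool) : Fin m → Bool := Function.update x j (!x j)

theorem flip_flip {m : ℕ} (j : Fin m) (x : Fin m → Bool) : flip j (flip j x) = x := by
  simp [flip]

theorem flip_ne {m : ℕ} {j l : Fin m} (h : l ≠ j) (x : Fin m → Bool) : flip j x l = x l := by
  simp [flip, h]

theorem flip_self {m : ℕ} (j : Fin m) (x : Fin m → Bool) : flip j x j = !x j := by
  simp [flip]

/-- Parity: `true` for an even string. -/
def par {m : ℕ} (x : Fin m → Bool) : Bool := decide ((∑ i, if x i then (1 : ZMod 2) else 0) = 0)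

theorem par_flip {m : ℕ} (j : Fin m) (x : Fin m → Bool) : par (flip j x) = !par x := by
  have h : (∑ i, if flip j x i then (1 : ZMod 2) else 0) =
      (∑ i, if x i then (1 : ZMod 2) else 0) + 1 := by
    rw [Fintype.sum_eq_add_sum_compl j, Fintype.sum_eq_add_sum_compl j (fun i => if x i then _ else _)]
    have : ∑ i ∈ {j}ᶜ, (if flip j x i then (1 : ZMod 2) else 0) =
        ∑ i ∈ {j}ᶜ, if x i then (1 : ZMod 2) else 0 := by
      apply Finset.sum_congr rfl
      intro i hi
      rw [flip_ne (by simpa using hi)]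
    rw [this, flip_self]
    generalize (∑ i ∈ {j}ᶜ, if x i then (1 : ZMod 2) else 0) = z
    cases x j <;> revert z <;> decide
  unfold par
  rw [h]
  generalize (∑ i, if x i then (1 : ZMod 2) else 0) = z
  revert z
  decide

theorem flip_induction {m : ℕ} (Q : (Fin m → Bool) → Prop) (x₀ : Fin m → Bool) (h0 : Q x₀)
    (hf : ∀ x j, Q x → Q (flip j x)) : ∀ x, Q x := by
  intro x
  have : ∀ S : Finset (Fin m), Q (fun i => if i ∈ S then x i else x₀ i) := by
    intro S
    induction S using Finset.induction_on with
    | empty => simpa using h0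
    | insert j S hj ih =>
      by_cases hx : x j = x₀ j
      · convert ih using 2 with i
        by_cases hi : i = j
        · subst hi; simp [hj, hx]
        · simp [hi]
      · convert hf _ j ih using 1
        funext i
        by_cases hi : i = j
        · subst hi
          rw [flip_self]
          simp only [Finset.mem_insert, true_or, if_true, hj, if_false]
          revert hx
          cases x i <;> cases x₀ i <;> simp
        · rw [flip_ne hi]; simp [hi]
  simpa using this Finset.univ

section Bip

variable {m n : ℕ}

/-- Exponent vector of the image of a variable. -/
noncomputable def bexp (I : Fin m ⊕ Fin n → Bool) :
    Sym2 ((Fin m ⊕ Fin n) × Bool) ⊕ ((Fin m ⊕ Fin n) × Bool) →₀ ℕ :=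
  ∑ q : Fin m × Fin n,
    Finsupp.single (Sum.inl s((Sum.inl q.1, I (Sum.inl q.1)), (Sum.inr q.2, I (Sum.inr q.2)))) 1

theorem phi_X (hm : 0 < m) (hn : 0 < n) (I : Fin m ⊕ Fin n → Bool) :
    phi (completeBipartiteGraph (Fin m) (Fin n)) (X I) = monomial (bexp I) 1 := by
  classical
  unfold phi
  simp only [aeval_X]
  have hiso : (univ.filter (fun l : Fin m ⊕ Fin n => ∀ k,
      ¬ (completeBipartiteGraph (Fin m) (Fin n)).Adj l k)) = ∅ := by
    apply Finset.filter_eq_empty_iff.2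
    rintro (l | l) _ hl
    · exact hl (Sum.inr ⟨0, hn⟩) (by simp)
    · exact hl (Sum.inl ⟨0, hm⟩) (by simp)
  have h2 : ∀ (s : Finset (Fin m ⊕ Fin n)), s = ∅ → (∏ l ∈ s, (X (Sum.inr (l, I l)) :
      MvPolynomial (Sym2 ((Fin m ⊕ Fin n) × Bool) ⊕ ((Fin m ⊕ Fin n) × Bool)) ℂ)) = 1 := by
    rintro s rfl; simp
  rw [h2 _ (by convert hiso), mul_one, bexp, MvPolynomial.monomial_sum_one]
  symm
  apply Finset.prod_bij (fun (q : Fin m × Fin n) _ => s(Sum.inl q.1, Sum.inr q.2))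
  · intro q _
    rw [SimpleGraph.mem_edgeFinset]
    simp
  · rintro ⟨a, b⟩ _ ⟨c, d⟩ _ h
    simpa using h
  · intro e he
    rw [SimpleGraph.mem_edgeFinset] at he
    induction e using Sym2.ind with
    | _ x y =>
      rcases x with x | x <;> rcases y with y | y
      · simp at he
      · exact ⟨(x, y), by simp, rfl⟩
      · exact ⟨(y, x), by simp, Sym2.eq_swap⟩
      · simp at he
  · intro q _
    rfl

theorem bexp_apply (I : Fin m ⊕ Fin n → Bool) (i : Fin m) (k : Fin n) (a b : Bool) :
    bexp I (Sum.inl s((Sum.inl i, a), (Sum.inr k, b))) =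
      if I (Sum.inl i) = a ∧ I (Sum.inr k) = b then 1 else 0 := by
  classical
  unfold bexp
  rw [Finsupp.finsetSum_apply, Finset.sum_eq_single (i, k)]
  · rw [Finsupp.single_apply]
    congr 1
    simp
  · rintro ⟨i', k'⟩ _ hne
    rw [Finsupp.single_apply, if_neg]
    intro h
    apply hne
    simp at h
    simp [h.1.1, h.2.1]
  · simp

theorem marg_eq (s t : (Fin m ⊕ Fin n → Bool) →₀ ℕ) (h : expMap bexp s = expMap bexp t)
    (i : Fin m) (k : Fin n) (a b : Bool) :
    (∑ I, if I (Sum.inl i) = a ∧ I (Sum.inr k) = b then s I else 0) =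
    (∑ I, if I (Sum.inl i) = a ∧ I (Sum.inr k) = b then t I else 0) := by
  have := DFunLike.congr_fun h (Sum.inl s((Sum.inl i, a), (Sum.inr k, b)))
  simpa [expMap, Finsupp.finsetSum_apply, bexp_apply] using this

/-- The full string attached to `x`. -/
def full (L : (Fin m → Bool) → Fin n → Bool) (x : Fin m → Bool) : Fin m ⊕ Fin n → Bool :=
  Sum.elim x (L x)

theorem full_inj (L : (Fin m → Bool) → Fin n → Bool) : Function.Injective (full L) := by
  intro x y h
  funext i
  exact congrFun h (Sum.inl i)

/-- The table supported on strings of given parity. -/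
noncomputable def tab (L : (Fin m → Bool) → Fin n → Bool) (p : Bool) :
    (Fin m ⊕ Fin n → Bool) →₀ ℕ :=
  ∑ x ∈ univ.filter (fun x => par x = p), Finsupp.single (full L x) 1

theorem tab_apply_full (L : (Fin m → Bool) → Fin n → Bool) (p : Bool) (x : Fin m → Bool) :
    tab L p (full L x) = if par x = p then 1 else 0 := by
  classical
  unfold tab
  rw [Finsupp.finsetSum_apply]
  simp only [Finsupp.single_apply, (full_inj L).eq_iff]
  rw [Finset.sum_ite_eq']
  simp

theorem tab_apply_ne (L : (Fin m → Bool) → Fin n → Bool) (p : Bool) (I : Fin m ⊕ Fin n → Bool)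
    (h : ∀ x, full L x ≠ I) : tab L p I = 0 := by
  classical
  unfold tab
  rw [Finsupp.finsetSum_apply]
  simp [Finsupp.single_apply, h]

theorem sum_tab (L : (Fin m → Bool) → Fin n → Bool) (p : Bool)
    (w : (Fin m ⊕ Fin n → Bool) → Prop) [DecidablePred w] :
    (∑ I, if w I then tab L p I else 0) =
      ∑ x, if w (full L x) ∧ par x = p then 1 else 0 := by
  classical
  rw [← Finset.sum_subset (Finset.subset_univ (univ.image (full L)))]
  · rw [Finset.sum_image (fun x _ y _ h => full_inj L h)]
    apply Finset.sum_congr rfl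
    intro x _
    rw [tab_apply_full]
    split_ifs <;> simp_all
  · intro I _ hI
    rw [tab_apply_ne]
    · simp
    · intro x hx
      exact hI (by simp [← hx])

theorem card_par (hm : 0 < m) (p : Bool) :
    ∑ x : Fin m → Bool, (if par x = p then 1 else 0) = 2 ^ (m - 1) := by
  have h1 : ∑ x : Fin m → Bool, (if par x = p then 1 else 0) =
      ∑ x : Fin m → Bool, (if par x = !p then 1 else 0) := by
    apply Fintype.sum_bijective (flip ⟨0, hm⟩)
    · exact (show Function.Involutive (flip (⟨0, hm⟩ : Fin m)) from flip_flip _).bijective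
    · intro x
      rw [par_flip]
      cases par x <;> cases p <;> rfl
  have h2 : ∑ x : Fin m → Bool, (if par x = p then 1 else 0) +
      ∑ x : Fin m → Bool, (if par x = !p then 1 else 0) = 2 ^ m := by
    rw [← Finset.sum_add_distrib]
    have : ∀ x : Fin m → Bool, ((if par x = p then 1 else 0) + if par x = !p then 1 else 0) = 1 := by
      intro x
      cases par x <;> cases p <;> rfl
    simp [this]
  obtain ⟨q, rfl⟩ : ∃ q, m = q + 1 := ⟨m - 1, by omega⟩
  rw [pow_succ] at h2
  simp only [Nat.add_sub_cancel]
  omega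

theorem tab_degree (hm : 0 < m) (L : (Fin m → Bool) → Fin n → Bool) (p : Bool) :
    (tab L p).degree = 2 ^ (m - 1) := by
  rw [← card_par hm p, tab, map_sum]
  simp

/-- `L · k` is the indicator of the face through `z` in directions `i, j`. -/
def IsFace (L : (Fin m → Bool) → Fin n → Bool) (k : Fin n) (i j : Fin m) (z : Fin m → Bool) :
    Prop :=
  ∀ x, L x k = true ↔ ∀ l, l ≠ i → l ≠ j → x l = z l

theorem IsFace.swap {L : (Fin m → Bool) → Fin n → Bool} {k : Fin n} {i j : Fin m}
    {z : Fin m → Bool} (h : IsFace L k i j z) : IsFace L k j i z := by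
  intro x
  rw [h x]
  exact ⟨fun h l a b => h l b a, fun h l a b => h l b a⟩

theorem IsFace.flip {L : (Fin m → Bool) → Fin n → Bool} {k : Fin n} {i j : Fin m}
    {z : Fin m → Bool} (h : IsFace L k i j z) (x : Fin m → Bool) : L (flip j x) k = L x k := by
  rw [Bool.eq_iff_iff, h, h]
  have : ∀ l, l ≠ j → BinaryGraphModels.flip j x l = x l := fun l hl => flip_ne hl x
  constructor
  · intro h l a b
    rw [← this l b]; exact h l a b
  · intro h l a b
    rw [this l b]; exact h l a b

theorem expMap_tab (L : (Fin m → Bool) → Fin n → Bool) (p : Bool) :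
    expMap bexp (tab L p) = ∑ x ∈ univ.filter (fun x => par x = p), bexp (full L x) := by
  classical
  unfold expMap tab
  simp only [Finsupp.finsetSum_apply, Finset.sum_smul]
  rw [Finset.sum_comm]
  apply Finset.sum_congr rfl
  intro x _
  simp [Finsupp.single_apply, ite_smul]

theorem same_fiber (L : (Fin m → Bool) → Fin n → Bool)
    (H1 : ∀ k, ∃ i j z, i ≠ j ∧ IsFace L k i j z) :
    expMap bexp (tab L false) = expMap bexp (tab L true) := by
  classical
  rw [expMap_tab, expMap_tab]
  unfold bexp
  rw [Finset.sum_comm]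
  conv_rhs => rw [Finset.sum_comm]
  apply Finset.sum_congr rfl
  rintro ⟨i, k⟩ _
  obtain ⟨j, hij, hj⟩ : ∃ j, j ≠ i ∧ ∀ x, L (flip j x) k = L x k := by
    obtain ⟨a, b, z, hab, hf⟩ := H1 k
    by_cases h : b = i
    · exact ⟨a, fun h' => hab (h'.trans h.symm), hf.swap.flip⟩
    · exact ⟨b, h, hf.flip⟩
  apply Finset.sum_bij (fun x _ => flip j x)
  · intro x hx
    simp only [Finset.mem_filter, Finset.mem_univ, true_and] at hx ⊢
    rw [par_flip, hx]; rfl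
  · intro x _ y _ h
    rw [← flip_flip j x, h, flip_flip]
  · intro y hy
    refine ⟨flip j y, ?_, flip_flip _ _⟩
    simp only [Finset.mem_filter, Finset.mem_univ, true_and] at hy ⊢
    rw [par_flip, hy]; rfl
  · intro x _
    simp [full, hj, flip_ne hij.symm]

theorem sum_restrict (g : (Fin m ⊕ Fin n → Bool) → ℕ) (w : (Fin m → Bool) → Prop)
    [DecidablePred w] :
    (∑ I, if w (I ∘ Sum.inl) then g I else 0) =
      ∑ y, if w y then (∑ I, if I ∘ Sum.inl = y then g I else 0) else 0 := by
  classical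
  have : ∀ I : Fin m ⊕ Fin n → Bool, (if w (I ∘ Sum.inl) then g I else 0) =
      ∑ y, if w y then (if I ∘ Sum.inl = y then g I else 0) else 0 := by
    intro I
    rw [Finset.sum_eq_single (I ∘ Sum.inl)]
    · simp
    · intro y _ hy
      simp [hy.symm]
    · simp
  rw [Finset.sum_congr rfl (fun I _ => this I), Finset.sum_comm]
  apply Finset.sum_congr rfl
  intro y _
  split_ifs <;> simp

theorem fiber_two (hm : 2 ≤ m) (L : (Fin m → Bool) → Fin n → Bool)
    (H1 : ∀ k, ∃ i j z, i ≠ j ∧ IsFace L k i j z)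
    (H2 : ∀ i j z, i ≠ j → ∃ k, IsFace L k i j z)
    (t : (Fin m ⊕ Fin n → Bool) →₀ ℕ)
    (ht : expMap bexp t = expMap bexp (tab L true)) : t = tab L true ∨ t = tab L false := by
  classical
  have hM : ∀ i k a b, (∑ I, if I (Sum.inl i) = a ∧ I (Sum.inr k) = b then t I else 0) =
      ∑ x, if (x i = a ∧ L x k = b) ∧ par x = true then 1 else 0 := by
    intro i k a b
    rw [marg_eq _ _ ht i k a b, sum_tab L true (fun I => I (Sum.inl i) = a ∧ I (Sum.inr k) = b)]
    rfl
  set T : (Fin m → Bool) → ℕ := fun y => ∑ I, if I ∘ Sum.inl = y then t I else 0 with hT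
  set N : Fin n → (Fin m → Bool) → ℕ := fun k y =>
    ∑ I, if I ∘ Sum.inl = y then (if I (Sum.inr k) = true then t I else 0) else 0 with hN
  have hNT : ∀ k y, N k y ≤ T y := by
    intro k y
    apply Finset.sum_le_sum
    intro I _
    split_ifs <;> simp
  have hMN : ∀ i k a, (∑ y, if y i = a then N k y else 0) =
      ∑ x, if (x i = a ∧ L x k = true) ∧ par x = true then 1 else 0 := by
    intro i k a
    rw [← hM, ← sum_restrict (fun I => if I (Sum.inr k) = true then t I else 0)
      (fun y => y i = a)]
    apply Finset.sum_congr rfl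
    intro I _
    simp only [Function.comp, ite_and]
  -- N vanishes off the face
  have hN0 : ∀ k y, L y k = false → N k y = 0 := by
    intro k y hy
    obtain ⟨i, j, z, hij, hf⟩ := H1 k
    have h1 : ¬ (L y k = true) := by simp [hy]
    rw [hf] at h1
    push Not at h1
    obtain ⟨l, hli, hlj, hl⟩ := h1
    have h2 := hMN l k (y l)
    have h3 : (∑ x, if (x l = y l ∧ L x k = true) ∧ par x = true then 1 else 0) = 0 := by
      apply Finset.sum_eq_zero
      intro x _
      rw [if_neg]
      rintro ⟨⟨h4, h5⟩, _⟩
      exact hl (h4 ▸ (hf x).1 h5 l hli hlj)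
    rw [h3, Finset.sum_eq_zero_iff] at h2
    simpa using h2 y (Finset.mem_univ _)
  -- on faces, the pair sum is one
  have hpair : ∀ (f : (Fin m → Bool) → ℕ) k i j z, i ≠ j → IsFace L k i j z → ∀ x,
      L x k = true → (∀ y, L y k = false → f y = 0) →
      (∑ y, if y i = x i then f y else 0) = f x + f (flip j x) := by
    intro f k i j z hij hf x hx h0
    have hxne : x ≠ flip j x := by
      intro h
      have := congrFun h j
      rw [flip_self] at this
      revert this
      cases x j <;> simp
    rw [← Finset.sum_subset (Finset.subset_univ {x, flip j x}), Finset.sum_pair hxne]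
    · simp [flip_ne hij]
    · intro y _ hy
      by_cases hyi : y i = x i
      · rw [if_pos hyi]
        apply h0
        by_contra hL
        have hL' : L y k = true := by simpa using hL
        apply hy
        rw [Finset.mem_insert, Finset.mem_singleton]
        have hoff : ∀ l, l ≠ j → y l = x l := by
          intro l hl
          by_cases hli : l = i
          · rw [hli, hyi]
          · rw [(hf y).1 hL' l hli hl, (hf x).1 hx l hli hl]
        by_cases hyj : y j = x j
        · left
          funext l
          by_cases hl : l = j
          · rw [hl, hyj]
          · exact hoff l hl
        · right
          funext l
          by_cases hl : l = j
          · rw [hl, flip_self]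
            revert hyj
            cases y j <;> cases x j <;> simp
          · rw [flip_ne hl, hoff l hl]
      · rw [if_neg hyi]
  have hN1 : ∀ k i j z, i ≠ j → IsFace L k i j z → ∀ x, L x k = true →
      N k x + N k (flip j x) = 1 := by
    intro k i j z hij hf x hx
    rw [← hpair (N k) k i j z hij hf x hx (hN0 k), hMN]
    have h1 := hpair (fun y => if L y k = true ∧ par y = true then 1 else 0) k i j z hij hf x hx
      (by intro y hy; simp [hy])
    have h2 : (∑ y, if (y i = x i ∧ L y k = true) ∧ par y = true then 1 else 0) =
        ∑ y, if y i = x i then (if L y k = true ∧ par y = true then 1 else 0) else 0 := by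
      apply Finset.sum_congr rfl
      intro y _
      simp only [ite_and]
    rw [h2, h1, hf.flip, hx, par_flip]
    cases par x <;> simp
  have hother : ∀ j : Fin m, ∃ i, i ≠ j := by
    intro j
    haveI : Nontrivial (Fin m) := Fin.nontrivial_iff_two_le.2 hm
    exact exists_ne j
  have hge : ∀ j x, 1 ≤ T x + T (flip j x) := by
    intro j x
    obtain ⟨i, hij⟩ := hother j
    obtain ⟨k, hk⟩ := H2 i j x hij
    have hx : L x k = true := (hk x).2 (fun _ _ _ => rfl)
    rw [← hN1 k i j x hij hk x hx]
    exact Nat.add_le_add (hNT _ _) (hNT _ _)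
  have hTsum : ∑ y, T y = 2 ^ (m - 1) := by
    have i₀ : Fin m := ⟨0, by omega⟩
    obtain ⟨i₁, hi⟩ := hother i₀
    obtain ⟨k₀, _⟩ := H2 i₁ i₀ (fun _ => false) hi
    have h1 : ∑ y, T y = ∑ I, t I := by
      have := sum_restrict (fun I : Fin m ⊕ Fin n → Bool => t I) (fun _ => True)
      simpa using this.symm
    rw [h1, ← card_par (by omega) true]
    have e1 : ∀ I : Fin m ⊕ Fin n → Bool, t I = ∑ a : Bool, ∑ b : Bool,
        if I (Sum.inl i₀) = a ∧ I (Sum.inr k₀) = b then t I else 0 := by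
      intro I
      cases I (Sum.inl i₀) <;> cases I (Sum.inr k₀) <;> simp
    have e2 : ∀ x : Fin m → Bool, (if par x = true then 1 else 0) = ∑ a : Bool, ∑ b : Bool,
        if (x i₀ = a ∧ L x k₀ = b) ∧ par x = true then 1 else 0 := by
      intro x
      cases x i₀ <;> cases L x k₀ <;> cases par x <;> rfl
    rw [Finset.sum_congr rfl (fun I _ => e1 I), Finset.sum_congr rfl (fun x _ => e2 x),
      Finset.sum_comm]
    conv_rhs => rw [Finset.sum_comm]
    apply Finset.sum_congr rfl
    intro a _
    rw [Finset.sum_comm]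
    conv_rhs => rw [Finset.sum_comm]
    exact Finset.sum_congr rfl (fun b _ => hM i₀ k₀ a b)
  have heq : ∀ j x, T x + T (flip j x) = 1 := by
    intro j
    have hs : ∑ x : Fin m → Bool, 1 = ∑ x, (T x + T (flip j x)) := by
      rw [Finset.sum_add_distrib]
      have : ∑ x, T (flip j x) = ∑ x, T x := by
        apply Fintype.sum_bijective (flip j)
        · exact (show Function.Involutive (flip j) from flip_flip _).bijective
        · intro x; rfl
      rw [this, hTsum]
      obtain ⟨q, rfl⟩ : ∃ q, m = q + 1 := ⟨m - 1, by omega⟩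
      simp [pow_succ]
      omega
    have := (Finset.sum_eq_sum_iff_of_le (fun x _ => hge j x)).1 hs
    intro x
    exact (this x (Finset.mem_univ _)).symm
  have hTN : ∀ k x, L x k = true → T x = N k x := by
    intro k x hx
    obtain ⟨i, j, z, hij, hf⟩ := H1 k
    have h1 := hN1 k i j z hij hf x hx
    have h2 := heq j x
    have h3 := hNT k x
    have h4 := hNT k (flip j x)
    omega
  -- support of t
  have hsupp : ∀ I, t I ≠ 0 → I = full L (I ∘ Sum.inl) := by
    intro I hI
    funext v
    rcases v with i | k
    · rfl
    · change I (Sum.inr k) = L (I ∘ Sum.inl) k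
      by_contra hne
      cases hL : L (I ∘ Sum.inl) k
      · have hIk : I (Sum.inr k) = true := by
          rw [hL] at hne; simpa using hne
        have := hN0 k _ hL
        rw [hN] at this
        simp only [Finset.sum_eq_zero_iff] at this
        have := this I (Finset.mem_univ _)
        rw [if_pos rfl, if_pos hIk] at this
        exact hI this
      · have hIk : I (Sum.inr k) = false := by
          rw [hL] at hne; simpa using hne
        have h5 := (hTN k _ hL).symm
        rw [hN, hT] at h5
        have := (Finset.sum_eq_sum_iff_of_le (fun J _ => by split_ifs <;> simp)).1 h5 I
          (Finset.mem_univ _)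
        simp [hIk] at this
        exact hI this.symm
  have hfullT : ∀ x, t (full L x) = T x := by
    intro x
    rw [hT]
    simp only
    rw [Finset.sum_eq_single (full L x)]
    · rw [if_pos]; rfl
    · intro I _ hne
      split_ifs with h
      · by_contra h0
        apply hne
        rw [hsupp I h0, h]
      · rfl
    · simp
  have hfin : ∀ p : Bool, (∀ x, T x = if par x = p then 1 else 0) → t = tab L p := by
    intro p hp
    ext I
    by_cases hI : ∃ x, full L x = I
    · obtain ⟨x, rfl⟩ := hI
      rw [hfullT, hp, tab_apply_full]
    · push Not at hI
      rw [tab_apply_ne L p I hI]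
      by_contra h0
      exact hI _ (hsupp I h0).symm
  have hstep : ∀ p : Bool, ∀ x₀, (T x₀ = if par x₀ = p then 1 else 0) →
      ∀ x, T x = if par x = p then 1 else 0 := by
    intro p x₀ h0
    refine flip_induction (fun x => T x = if par x = p then 1 else 0) x₀ h0 ?_
    intro x j hx
    have := heq j x
    rw [par_flip]
    rw [hx] at this
    revert this
    cases par x <;> cases p <;> simp
  have x₀ : Fin m → Bool := fun _ => false
  have h01 := heq ⟨0, by omega⟩ x₀
  have hcase : T x₀ = 0 ∨ T x₀ = 1 := by omega
  have : (T x₀ = if par x₀ = true then 1 else 0) ∨ (T x₀ = if par x₀ = false then 1 else 0) := by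
    rcases hcase with h | h <;> rw [h] <;> cases par x₀ <;> simp
  rcases this with h | h
  · left; exact hfin _ (hstep _ _ h)
  · right; exact hfin _ (hstep _ _ h)

/-- Two-dimensional faces of the cube. -/
abbrev Face (m : ℕ) : Type :=
  Σ P : {P : Finset (Fin m) // P.card = 2}, ({l : Fin m // l ∉ P.1} → Bool)

theorem card_face : Fintype.card (Face m) = m.choose 2 * 2 ^ (m - 2) := by
  classical
  rw [Fintype.card_sigma]
  have : ∀ P : {P : Finset (Fin m) // P.card = 2},
      Fintype.card ({l : Fin m // l ∉ P.1} → Bool) = 2 ^ (m - 2) := by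
    intro P
    rw [Fintype.card_fun, Fintype.card_bool, Fintype.card_subtype_compl]
    simp [P.2]
  rw [Finset.sum_congr rfl (fun P _ => this P)]
  simp

/-- Membership in a face. -/
def inFace (f : Face m) (x : Fin m → Bool) : Prop := ∀ l : {l : Fin m // l ∉ f.1.1}, x l = f.2 l

theorem exists_labels (hm : 2 ≤ m) (hn : m.choose 2 * 2 ^ (m - 2) ≤ n) :
    ∃ L : (Fin m → Bool) → Fin n → Bool,
      (∀ k, ∃ i j z, i ≠ j ∧ IsFace L k i j z) ∧
      (∀ i j z, i ≠ j → ∃ k, IsFace L k i j z) := by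
  classical
  have hc : Fintype.card (Face m) ≤ Fintype.card (Fin n) := by
    rw [card_face]; simpa using hn
  obtain ⟨e⟩ := Function.Embedding.nonempty_of_card_le hc
  haveI : Nonempty (Face m) := by
    rw [← Fintype.card_pos_iff, card_face]
    have := Nat.choose_pos hm
    positivity
  let c : Fin n → Face m := Function.invFun e
  have hcs : Function.Surjective c := Function.invFun_surjective e.injective
  refine ⟨fun x k => decide (inFace (c k) x), ?_, ?_⟩
  · intro k
    obtain ⟨i, j, hij, hP⟩ := Finset.card_eq_two.1 (c k).1.2
    refine ⟨i, j, fun l => if h : l ∉ (c k).1.1 then (c k).2 ⟨l, h⟩ else false, hij, ?_⟩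
    intro x
    rw [decide_eq_true_iff]
    constructor
    · intro h l hli hlj
      have hl : l ∉ (c k).1.1 := by rw [hP]; simp [hli, hlj]
      simp only [dif_pos hl]
      exact h ⟨l, hl⟩
    · rintro h ⟨l, hl⟩
      have hl' := hl
      rw [hP] at hl'
      simp only [Finset.mem_insert, Finset.mem_singleton, not_or] at hl'
      rw [h l hl'.1 hl'.2]
      simp only [dif_pos hl]
  · intro i j z hij
    obtain ⟨k, hk⟩ := hcs ⟨⟨{i, j}, Finset.card_pair hij⟩, fun l => z l⟩
    refine ⟨k, ?_⟩
    intro x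
    rw [decide_eq_true_iff, hk]
    constructor
    · intro h l hli hlj
      exact h ⟨l, show l ∉ ({i, j} : Finset (Fin m)) by simp [hli, hlj]⟩
    · rintro h ⟨l, hl⟩
      have hl2 : l ∉ ({i, j} : Finset (Fin m)) := hl
      simp only [Finset.mem_insert, Finset.mem_singleton, not_or] at hl2
      exact h l hl2.1 hl2.2

end Bip

/-- for `m ≥ 2` and `n ≥ C(m,2)·2^{m-2}`, the toric ideal of `K_{m,n}` is not
generated in degree `≤ 2^{m-1} - 1`; it has a minimal generator of degree `2^{m-1}` and
`μ(K_{m,n}) ≥ 2^{m-1}`. -/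
theorem completeBipartite_large_degree (m n : ℕ) (hm : 2 ≤ m)
    (hn : Nat.choose m 2 * 2 ^ (m - 2) ≤ n) :
    ¬ GenInDegLE (completeBipartiteGraph (Fin m) (Fin n)) (2 ^ (m - 1) - 1) ∧
    (∃ f : MvPolynomial ((Fin m ⊕ Fin n) → Bool) ℂ,
      IsMinimalGenerator (completeBipartiteGraph (Fin m) (Fin n)) f ∧
        f.totalDegree = 2 ^ (m - 1)) ∧
    2 ^ (m - 1) ≤ markovWidth (completeBipartiteGraph (Fin m) (Fin n)) := by
  have hn0 : 0 < n := by
    have := Nat.choose_pos hm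
    exact lt_of_lt_of_le (by positivity) hn
  obtain ⟨L, H1, H2⟩ := exists_labels hm hn
  apply conclusion_of_fiber (completeBipartiteGraph (Fin m) (Fin n)) (2 ^ (m - 1)) bexp
    (phi_X (by omega) hn0) (tab L true) (tab L false) (same_fiber L H1)
    (fiber_two hm L H1 H2) _ (tab_degree (by omega) L true) (tab_degree (by omega) L false)
    (by positivity)
  intro I hI
  by_cases h : ∃ x, full L x = I
  · obtain ⟨x, rfl⟩ := h
    rw [tab_apply_full] at hI ⊢
    revert hI
    cases par x <;> simp
  · push Not at h
    exact absurd (tab_apply_ne L true I h) hI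

end BinaryGraphModels
end

section
/- Let G be a finite simple graph on vertex set V, let v ∈ V, and let f = ∏_{j=1}^{d} p_{I_j} − ∏_{j=1}^{d} p_{J_j} be a nonzero binomial in I_G such that all 2d index strings I₁,…,I_d, J₁,…,J_d take the same common value c ∈ {0,1} at v. Let G' be the induced subgraph of G on V∖{v} and let f̃ = ∏_{j=1}^{d} p_{I_j|_{V∖{v}}} − ∏_{j=1}^{d} p_{J_j|_{V∖{v}}}. Then f̃ ∈ I_{G'}, and f is a minimal generator of I_G if and only if f̃ is a minimal generator of I_{G'}. -/
open MvPolynomial Finset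

namespace BinaryGraphModels

/-- The induced subgraph of `G` obtained by deleting the vertex `w`. -/
def deleteVertex {V : Type} (G : SimpleGraph V) (w : V) : SimpleGraph {x : V // x ≠ w} :=
  SimpleGraph.comap Subtype.val G

/-- Edge products split into edges avoiding `v` and edges through `v`. -/
lemma prod_edges_split {V : Type} [Fintype V] [DecidableEq V] {M : Type*} [CommMonoid M]
    (G : SimpleGraph V) (v : V) [DecidableRel G.Adj] [Fintype G.edgeSet]
    [Fintype (deleteVertex G v).edgeSet] (F : Sym2 V → M) :
    ∏ e ∈ G.edgeFinset, F e =
      (∏ e ∈ (deleteVertex G v).edgeFinset, F (Sym2.map Subtype.val e)) *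
        ∏ k : {x : V // x ≠ v}, if G.Adj k.val v then F s(k.val, v) else 1 := by
  classical
  rw [← Finset.prod_filter_not_mul_prod_filter _ (fun e => v ∈ e)]
  congr 1
  · symm
    refine Finset.prod_bij (fun e _ => Sym2.map Subtype.val e) ?_ ?_ ?_ ?_
    · intro e
      induction e with | _ a b => ?_
      intro h
      have h1 : G.Adj a.1 b.1 := by
        rw [SimpleGraph.mem_edgeFinset] at h
        exact h
      simp [SimpleGraph.mem_edgeFinset, h1, a.2.symm, b.2.symm]
    · intro a _ b _ h
      exact Sym2.map.injective Subtype.val_injective h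
    · intro e
      induction e with | _ a b => ?_
      intro h
      simp only [Finset.mem_filter, SimpleGraph.mem_edgeFinset, SimpleGraph.mem_edgeSet,
        Sym2.mem_iff, not_or] at h
      refine ⟨s(⟨a, fun hh => h.2.1 hh.symm⟩, ⟨b, fun hh => h.2.2 hh.symm⟩), ?_, ?_⟩
      · rw [SimpleGraph.mem_edgeFinset]
        exact h.1
      · simp
    · intros; rfl
  · rw [← Finset.prod_filter]
    symm
    refine Finset.prod_bij (fun k _ => s(k.val, v)) ?_ ?_ ?_ ?_
    · intro k hk
      simpa [SimpleGraph.mem_edgeFinset] using hk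
    · intro a _ b _ h
      apply Subtype.ext
      exact Sym2.congr_left.1 h
    · intro e
      induction e with | _ a b => ?_
      intro h
      simp only [Finset.mem_filter, SimpleGraph.mem_edgeFinset, SimpleGraph.mem_edgeSet,
        Sym2.mem_iff] at h
      obtain ⟨h1, rfl | rfl⟩ := h
      · exact ⟨⟨b, h1.ne'⟩, by simpa using h1.symm, Sym2.eq_swap⟩
      · exact ⟨⟨a, h1.ne⟩, by simpa using h1, rfl⟩
    · intros; rfl

/-- Vertex products split off the factor at `v`. -/
lemma prod_vertices_split {V : Type} [Fintype V] [DecidableEq V] {M : Type*} [CommMonoid M]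
    (v : V) (F : V → M) :
    ∏ l : V, F l = F v * ∏ k : {x : V // x ≠ v}, F k.val := by
  exact Fintype.prod_eq_mul_prod_subtype_ne F v

open Classical in
lemma phi_X_s10 {V : Type} [Fintype V] [DecidableEq V] (G : SimpleGraph V) (I : V → Bool) :
    phi G (X I) = (∏ e ∈ G.edgeFinset,
      (X (Sum.inl (Sym2.map (fun v => (v, I v)) e)) :
        MvPolynomial (Sym2 (V × Bool) ⊕ (V × Bool)) ℂ)) *
      ∏ l : V, if ∀ k, ¬ G.Adj l k then X (Sum.inr (l, I l)) else 1 := by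
  unfold phi
  rw [aeval_X, ← Finset.prod_filter]

open Classical in
lemma phi_X_split {V : Type} [Fintype V] [DecidableEq V] (G : SimpleGraph V) (v : V)
    (I : V → Bool) :
    phi G (X I) =
      ((∏ e ∈ (deleteVertex G v).edgeFinset,
        (X (Sum.inl (Sym2.map (fun v => (v, I v)) (Sym2.map Subtype.val e))) :
        MvPolynomial (Sym2 (V × Bool) ⊕ (V × Bool)) ℂ)) *
        ∏ k : {x : V // x ≠ v}, if G.Adj k.val v then
          X (Sum.inl s((k.val, I k.val), (v, I v))) else 1) *
      ((if ∀ k, ¬ G.Adj v k then X (Sum.inr (v, I v)) else 1) *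
        ∏ l : {x : V // x ≠ v}, if ∀ k, ¬ G.Adj l.val k then
          X (Sum.inr (l.val, I l.val)) else 1) := by
  rw [phi_X_s10, prod_edges_split G v, prod_vertices_split v]
  rfl

lemma iso_iff {V : Type} (G : SimpleGraph V) (v : V) (l : {x : V // x ≠ v}) :
    (∀ k, ¬ G.Adj l.val k) ↔ (∀ k, ¬ (deleteVertex G v).Adj l k) ∧ ¬ G.Adj l.val v := by
  constructor
  · intro h
    exact ⟨fun k => h k.val, h v⟩
  · rintro ⟨h1, h2⟩ k hk
    by_cases hkv : k = v
    · subst hkv; exact h2 hk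
    · exact h1 ⟨k, hkv⟩ hk

/-- Extension of an index string by the value `c` at `v`. -/
def ext {V : Type} [DecidableEq V] (v : V) (c : Bool) (I : {x : V // x ≠ v} → Bool) :
    V → Bool := fun x => if h : x ≠ v then I ⟨x, h⟩ else c

lemma ext_val {V : Type} [DecidableEq V] (v : V) (c : Bool) (I : {x : V // x ≠ v} → Bool)
    (k : {x : V // x ≠ v}) : ext v c I k.val = I k := by
  simp [ext, k.2]

lemma ext_self {V : Type} [DecidableEq V] (v : V) (c : Bool) (I : {x : V // x ≠ v} → Bool) :
    ext v c I v = c := by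
  simp [ext]

lemma ext_restrict {V : Type} [DecidableEq V] (v : V) (c : Bool) (I : V → Bool)
    (h : I v = c) : ext v c (fun x => I x.val) = I := by
  funext x
  by_cases hx : x = v
  · subst hx; simp [ext, h]
  · simp [ext, hx]

/-- The projection `R_G → R_{G'}` killing the strings with the wrong value at `v`. -/
noncomputable def proj {V : Type} (v : V) (c : Bool) :
    MvPolynomial (V → Bool) ℂ →ₐ[ℂ] MvPolynomial ({x : V // x ≠ v} → Bool) ℂ :=
  aeval fun I => if I v = c then X (fun x => I x.val) else 0

/-- The section `R_{G'} → R_G`. -/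
noncomputable def incl {V : Type} [DecidableEq V] (v : V) (c : Bool) :
    MvPolynomial ({x : V // x ≠ v} → Bool) ℂ →ₐ[ℂ] MvPolynomial (V → Bool) ℂ :=
  aeval fun I => X (ext v c I)

open Classical in
lemma incl_mem {V : Type} [Fintype V] [DecidableEq V] (G : SimpleGraph V) (v : V) (c : Bool)
    (k0 : {x : V // x ≠ v}) (g : MvPolynomial ({x : V // x ≠ v} → Bool) ℂ)
    (hg : g ∈ toricIdeal (deleteVertex G v)) : incl v c g ∈ toricIdeal G := by
  have hl : ∀ k : {x : V // x ≠ v}, ∃ m, (∃ m, (deleteVertex G v).Adj k m) →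
      (deleteVertex G v).Adj k m := by
    intro k
    by_cases h : ∃ m, (deleteVertex G v).Adj k m
    · obtain ⟨m, hm⟩ := h
      exact ⟨m, fun _ => hm⟩
    · exact ⟨k, fun h' => absurd h' h⟩
  choose l hl using hl
  let A := MvPolynomial (Sym2 (V × Bool) ⊕ (V × Bool)) ℂ
  let h : {x : V // x ≠ v} → Bool → A := fun k a =>
    (if G.Adj k.val v then X (Sum.inl s((k.val, a), (v, c))) else 1) *
      (if k = k0 then (if ∀ k, ¬ G.Adj v k then X (Sum.inr (v, c)) else 1) else 1)
  let ψ : MvPolynomial (Sym2 ({x : V // x ≠ v} × Bool) ⊕ ({x : V // x ≠ v} × Bool)) ℂ →ₐ[ℂ] A :=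
    aeval (Sum.elim
      (fun e => X (Sum.inl (Sym2.map (fun p => (p.1.val, p.2)) e)) *
        ∏ k : {x : V // x ≠ v}, ∏ a : Bool,
          if (k, a) ∈ e ∧ Sym2.map Prod.fst e = s(k, l k) then h k a else 1)
      (fun p => (if ∀ k, ¬ G.Adj p.1.val k then X (Sum.inr (p.1.val, p.2)) else 1) *
        h p.1 p.2))
  have key : (phi G).comp (incl v c) = ψ.comp (phi (deleteVertex G v)) := by
    apply MvPolynomial.algHom_ext
    intro I
    simp only [AlgHom.comp_apply]
    rw [incl, aeval_X, phi_X_split G v, phi_X_s10]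
    simp only [map_mul, map_prod, apply_ite ψ, map_one, ext_val, ext_self]
    have e1 : ∀ e : Sym2 {x : V // x ≠ v},
        ψ (X (Sum.inl (Sym2.map (fun x => (x, I x)) e))) =
        X (Sum.inl (Sym2.map (fun x => (x, ext v c I x)) (Sym2.map Subtype.val e))) *
        ∏ k : {x : V // x ≠ v}, if e = s(k, l k) then h k (I k) else 1 := by
      intro e
      simp only [ψ, aeval_X, Sum.elim_inl, Sym2.map_map]
      congr 1
      · congr 3
        funext x
        simp [ext_val]
      · refine Finset.prod_congr rfl fun k _ => ?_
        have hid : Sym2.map (Prod.fst ∘ fun x => (x, I x)) e = e := by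
          have : (Prod.fst ∘ fun x : {x : V // x ≠ v} => (x, I x)) = id := rfl
          rw [this, Sym2.map_id]; rfl
        rw [hid]
        by_cases he : e = s(k, l k)
        · rw [if_pos he]
          rw [Finset.prod_eq_single (I k)]
          · rw [if_pos]
            refine ⟨?_, he⟩
            rw [he]; simp
          · intro b _ hb
            rw [if_neg]
            rintro ⟨h1, -⟩
            rw [Sym2.mem_map] at h1
            obtain ⟨x, -, hx⟩ := h1
            simp only [Prod.mk.injEq] at hx
            obtain ⟨rfl, hx⟩ := hx
            exact hb hx.symm
          · simp
        · rw [if_neg he]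
          apply Finset.prod_eq_one
          intro a _
          rw [if_neg]
          exact fun hh => he hh.2
    have e2 : ∀ k : {x : V // x ≠ v}, ψ (X (Sum.inr (k, I k))) =
        (if ∀ m, ¬ G.Adj k.val m then X (Sum.inr (k.val, I k)) else 1) * h k (I k) := by
      intro k
      simp only [ψ, aeval_X, Sum.elim_inr]
    simp only [e1, e2, Finset.prod_mul_distrib]
    clear e1 e2
    clear_value ψ
    rw [mul_assoc, mul_assoc]
    refine congrArg (fun z : A => _ * z) ?_
    · rw [Finset.prod_comm]
      have e3 : (if ∀ k, ¬ G.Adj v k then (X (Sum.inr (v, c)) : A) else 1) =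
          ∏ k : {x : V // x ≠ v}, if k = k0 then
            (if ∀ k, ¬ G.Adj v k then (X (Sum.inr (v, c)) : A) else 1) else 1 := by
        rw [Finset.prod_ite_eq' univ k0]; simp
      rw [e3]
      simp only [← Finset.prod_mul_distrib]
      refine Finset.prod_congr rfl fun k _ => ?_
      have e4 : (∏ e ∈ (deleteVertex G v).edgeFinset,
          if e = s(k, l k) then h k (I k) else 1) =
          if ∀ m, ¬ (deleteVertex G v).Adj k m then 1 else h k (I k) := by
        rw [Finset.prod_ite_eq' _ (s(k, l k)) (fun _ => h k (I k))]
        by_cases hk : ∀ m, ¬ (deleteVertex G v).Adj k m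
        · rw [if_pos hk, if_neg]
          simpa [SimpleGraph.mem_edgeFinset] using hk (l k)
        · rw [if_neg hk, if_pos]
          push Not at hk
          simpa [SimpleGraph.mem_edgeFinset] using hl k hk
      rw [e4]
      have hi := iso_iff G v k
      by_cases hk : ∀ m, ¬ (deleteVertex G v).Adj k m
      · rw [if_pos hk, if_pos hk]
        simp only [h]
        ring
      · have : ¬ ∀ m, ¬ G.Adj k.val m := fun hh => hk (hi.1 hh).1
        rw [if_neg hk, if_neg hk, if_neg this]
        simp only [h]
        ring
  have hg' : phi (deleteVertex G v) g = 0 := hg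
  show phi G (incl v c g) = 0
  have := congrArg (fun F => F g) key
  simp only [AlgHom.comp_apply] at this
  rw [this, hg', map_zero]

open Classical in
lemma proj_mem {V : Type} [Fintype V] [DecidableEq V] (G : SimpleGraph V) (v : V) (c : Bool)
    (k0 : {x : V // x ≠ v}) (g : MvPolynomial (V → Bool) ℂ)
    (hg : g ∈ toricIdeal G) : proj v c g ∈ toricIdeal (deleteVertex G v) := by
  let A := MvPolynomial (Sym2 ({x : V // x ≠ v} × Bool) ⊕ ({x : V // x ≠ v} × Bool)) ℂ
  let q : V × Bool → {x : V // x ≠ v} × Bool := fun p =>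
    if h : p.1 ≠ v then (⟨p.1, h⟩, p.2) else (k0, p.2)
  let iso : {x : V // x ≠ v} → Prop := fun k => ∀ m, ¬ (deleteVertex G v).Adj k m
  have hq : ∀ (k : {x : V // x ≠ v}) (a : Bool), q (k.val, a) = (k, a) := by
    intro k a
    simp [q, k.2]
  let ψ : MvPolynomial (Sym2 (V × Bool) ⊕ (V × Bool)) ℂ →ₐ[ℂ] A :=
    aeval (Sum.elim
      (fun e => if (v, !c) ∈ e then 0 else if (v, c) ∈ e then
          ∏ k : {x : V // x ≠ v}, ∏ a : Bool,
            if (k.val, a) ∈ e ∧ iso k then X (Sum.inr (k, a)) else 1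
        else X (Sum.inl (Sym2.map q e)))
      (fun p => if p.1 = v then (if p.2 = c then 1 else 0) else X (Sum.inr (q p))))
  have key : ψ.comp (phi G) = (phi (deleteVertex G v)).comp (proj v c) := by
    apply MvPolynomial.algHom_ext
    intro I
    simp only [AlgHom.comp_apply]
    rw [proj, aeval_X, phi_X_split G v]
    simp only [map_mul, map_prod, apply_ite ψ, map_one]
    have f1 : ∀ k : {x : V // x ≠ v}, ψ (X (Sum.inr (k.val, I k.val))) =
        X (Sum.inr (k, I k.val)) := by
      intro k
      simp only [ψ, aeval_X, Sum.elim_inr, if_neg k.2, hq]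
    have f2 : ψ (X (Sum.inr (v, I v))) = if I v = c then 1 else 0 := by
      simp only [ψ, aeval_X, Sum.elim_inr, if_true]
    have f3 : ∀ k : {x : V // x ≠ v}, ψ (X (Sum.inl s((k.val, I k.val), (v, I v)))) =
        if I v = c then (if iso k then X (Sum.inr (k, I k.val)) else 1) else 0 := by
      intro k
      simp only [ψ, aeval_X, Sum.elim_inl]
      by_cases hc : I v = c
      · rw [if_pos hc, if_neg, if_pos]
        · rw [Finset.prod_eq_single k]
          · rw [Finset.prod_eq_single (I k.val)]
            · simp
            · intro b _ hb
              rw [if_neg]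
              simp [hb, k.2]
            · simp
          · intro m _ hm
            apply Finset.prod_eq_one
            intro a _
            rw [if_neg]
            simp [m.2, Subtype.val_injective.ne hm]
          · simp
        · simp [hc]
        · simp [hc, k.2.symm]
      · have : I v = !c := by revert hc; cases I v <;> cases c <;> simp
        rw [if_neg hc, if_pos]
        simp [this]
    have f4 : ∀ e : Sym2 {x : V // x ≠ v},
        ψ (X (Sum.inl (Sym2.map (fun v => (v, I v)) (Sym2.map Subtype.val e)))) =
          X (Sum.inl (Sym2.map (fun x => (x, I x.val)) e)) := by
      intro e
      have hn : ∀ b, (v, b) ∉ Sym2.map (fun v => (v, I v)) (Sym2.map Subtype.val e) := by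
        intro b hb
        rw [Sym2.map_map, Sym2.mem_map] at hb
        obtain ⟨x, -, hx⟩ := hb
        simp only [Function.comp, Prod.mk.injEq] at hx
        exact x.2 hx.1
      simp only [ψ, aeval_X, Sum.elim_inl]
      rw [if_neg (hn _), if_neg (hn _), Sym2.map_map, Sym2.map_map]
      congr 3
      funext x
      simp [hq]
    simp only [f1, f2, f3, f4]
    by_cases hc : I v = c
    · simp only [if_pos hc]
      rw [phi_X_s10]
      simp only [ite_self, one_mul]
      rw [mul_assoc, ← Finset.prod_mul_distrib]
      congr 1
      refine Finset.prod_congr rfl fun k _ => ?_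
      have hi := iso_iff G v k
      by_cases h1 : G.Adj k.val v
      · rw [if_pos h1, if_neg (fun hh => (hi.1 hh).2 h1), mul_one]
      · rw [if_neg h1, one_mul]
        simp only [hi, h1, not_false_iff, and_true]
    · simp only [if_neg hc, map_zero]
      by_cases hv : ∀ k, ¬ G.Adj v k
      · rw [if_pos hv]; simp
      · push Not at hv
        obtain ⟨k, hk⟩ := hv
        have : (∏ k : {x : V // x ≠ v}, if G.Adj k.val v then (0 : A) else 1) = 0 := by
          apply Finset.prod_eq_zero (Finset.mem_univ ⟨k, hk.ne'⟩)
          rw [if_pos hk.symm]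
        rw [this]; simp
  have hg' : phi G g = 0 := hg
  show phi (deleteVertex G v) (proj v c g) = 0
  have := congrArg (fun F => F g) key
  simp only [AlgHom.comp_apply] at this
  rw [← this, hg', map_zero]

lemma incl_max {V : Type} [DecidableEq V] (v : V) (c : Bool) :
    (Ideal.span (Set.range (X : ({x : V // x ≠ v} → Bool) →
      MvPolynomial ({x : V // x ≠ v} → Bool) ℂ))).map (incl v c) ≤
    Ideal.span (Set.range (X : (V → Bool) → MvPolynomial (V → Bool) ℂ)) := by
  rw [Ideal.map_span, Ideal.span_le]
  rintro _ ⟨_, ⟨I, rfl⟩, rfl⟩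
  rw [incl, aeval_X]
  exact Ideal.subset_span ⟨_, rfl⟩

lemma proj_max {V : Type} (v : V) (c : Bool) :
    (Ideal.span (Set.range (X : (V → Bool) → MvPolynomial (V → Bool) ℂ))).map (proj v c) ≤
    Ideal.span (Set.range (X : ({x : V // x ≠ v} → Bool) →
      MvPolynomial ({x : V // x ≠ v} → Bool) ℂ)) := by
  rw [Ideal.map_span, Ideal.span_le]
  rintro _ ⟨_, ⟨I, rfl⟩, rfl⟩
  rw [proj, aeval_X]
  split_ifs
  · exact Ideal.subset_span ⟨_, rfl⟩
  · exact Ideal.zero_mem _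

/-- Lemma on vertex deletion: if `f = ∏ p_{I_j} - ∏ p_{J_j}` is a nonzero
binomial in `I_G` all of whose index strings take the common value `c` at a vertex `v`, then
the image binomial `f̃` obtained by deleting the coordinate `v` lies in `I_{G∖v}`, and `f` is a
minimal generator of `I_G` iff `f̃` is a minimal generator of `I_{G∖v}`. -/
theorem minimalGenerator_deleteVertex {V : Type} [Fintype V] [DecidableEq V]
    (G : SimpleGraph V) (v : V) (d : ℕ)
    (Istr Jstr : Fin d → (V → Bool)) (c : Bool)
    (hI : ∀ j, Istr j v = c) (hJ : ∀ j, Jstr j v = c)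
    (f : MvPolynomial (V → Bool) ℂ)
    (hfdef : f = (∏ j : Fin d, X (Istr j)) - ∏ j : Fin d, X (Jstr j))
    (hf0 : f ≠ 0)
    (hfI : f ∈ toricIdeal G) :
    ((∏ j : Fin d, X (fun x : {x : V // x ≠ v} => Istr j x.val)) -
        (∏ j : Fin d, X (fun x : {x : V // x ≠ v} => Jstr j x.val)) ∈
      toricIdeal (deleteVertex G v)) ∧
    (IsMinimalGenerator G f ↔
      IsMinimalGenerator (deleteVertex G v)
        ((∏ j : Fin d, X (fun x : {x : V // x ≠ v} => Istr j x.val)) -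
          ∏ j : Fin d, X (fun x : {x : V // x ≠ v} => Jstr j x.val))) := by
  obtain ⟨k0⟩ : Nonempty {x : V // x ≠ v} := by
    by_contra hne
    apply hf0
    rw [hfdef, sub_eq_zero]
    refine Finset.prod_congr rfl fun j _ => ?_
    congr 1
    funext x
    have hx : x = v := by
      by_contra hx
      exact hne ⟨⟨x, hx⟩⟩
    rw [hx, hI, hJ]
  set g : MvPolynomial ({x : V // x ≠ v} → Bool) ℂ :=
    (∏ j : Fin d, X (fun x : {x : V // x ≠ v} => Istr j x.val)) -
      ∏ j : Fin d, X (fun x : {x : V // x ≠ v} => Jstr j x.val) with hg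
  have h1 : proj v c f = g := by
    rw [hfdef, hg, map_sub, map_prod, map_prod]
    simp only [proj, aeval_X, hI, hJ, if_true]
  have h2 : incl v c g = f := by
    rw [hfdef, hg, map_sub, map_prod, map_prod]
    simp only [incl, aeval_X, ext_restrict v c _ (hI _), ext_restrict v c _ (hJ _)]
  have hgI : g ∈ toricIdeal (deleteVertex G v) := h1 ▸ proj_mem G v c k0 f hfI
  refine ⟨hgI, and_congr (iff_of_true hfI hgI) (not_congr ⟨fun h => ?_, fun h => ?_⟩)⟩
  · have h3 := Ideal.mem_map_of_mem (proj v c) h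
    rw [Ideal.map_mul, h1] at h3
    refine Ideal.mul_mono (proj_max v c) ?_ h3
    rw [Ideal.map_le_iff_le_comap]
    exact fun y hy => proj_mem G v c k0 y hy
  · have h3 := Ideal.mem_map_of_mem (incl v c) h
    rw [Ideal.map_mul, h2] at h3
    refine Ideal.mul_mono (incl_max v c) ?_ h3
    rw [Ideal.map_le_iff_le_comap]
    exact fun y hy => incl_mem G v c k0 y hy

end BinaryGraphModels
end

section
/- Let H be a finite simple graph on vertex set V and let C_A and C_B be proper 3-colorings of H. Define index strings a_j, b_j : V → {0,1} for j ∈ {1,2,3} by a_j(v) = 1 iff C_A(v) = j and b_j(v) = 1 iff C_B(v) = j, and set f = p_{a₁} p_{a₂} p_{a₃} − p_{b₁} p_{b₂} p_{b₃}. Then f ∈ I_H, and f lies in the ideal of R_H generated by the elements of I_H of total degree 2 if and only if C_A and C_B lie in the same connected component of the 3-coloring graph C₃(H). -/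
open MvPolynomial Finset

namespace BinaryGraphModels

/-- `C` is a proper 3-coloring of `H` (colors in `Fin 3`). -/
def ProperColoring {V : Type} (H : SimpleGraph V) (C : V → Fin 3) : Prop :=
  ∀ u v : V, H.Adj u v → C u ≠ C v

/-- `C'` is obtained from `C` by picking a color `i`, picking a connected component `K` of the
induced subgraph of `H` on the vertices not colored `i`, and interchanging the two colors
different from `i` on all vertices of `K` while leaving all other vertices unchanged. -/
def ColoringMove {V : Type} (H : SimpleGraph V) (C C' : V → Fin 3) : Prop :=
  ∃ i : Fin 3, ∃ K : (H.induce {v : V | C v ≠ i}).ConnectedComponent,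
    (∀ v : {v : V | C v ≠ i},
      ((H.induce {v : V | C v ≠ i}).connectedComponentMk v = K →
        C' v.val ≠ C v.val ∧ C' v.val ≠ i) ∧
      ((H.induce {v : V | C v ≠ i}).connectedComponentMk v ≠ K → C' v.val = C v.val)) ∧
    ∀ v : V, C v = i → C' v = C v

/-- One step (edge) in the 3-coloring graph `C₃(H)`: both endpoints are proper 3-colorings and
one is obtained from the other by a color-interchange move. -/
def ColoringStep {V : Type} (H : SimpleGraph V) (C C' : V → Fin 3) : Prop :=
  ProperColoring H C ∧ ProperColoring H C' ∧ (ColoringMove H C C' ∨ ColoringMove H C' C)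

/-- The exponent vector of `phi G (X I)`. -/
noncomputable def expo {V : Type} [Fintype V] [DecidableEq V] (G : SimpleGraph V) (I : V → Bool) :
    (Sym2 (V × Bool) ⊕ (V × Bool)) →₀ ℕ := by
  letI : DecidableRel G.Adj := Classical.decRel _
  exact (∑ e ∈ G.edgeFinset, Finsupp.single (Sum.inl (Sym2.map (fun v => (v, I v)) e)) 1) +
    ∑ l ∈ univ.filter (fun l : V => ∀ k, ¬ G.Adj l k), Finsupp.single (Sum.inr (l, I l)) 1

theorem phi_X_s15 {V : Type} [Fintype V] [DecidableEq V] (G : SimpleGraph V) (I : V → Bool) :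
    phi G (X I) = monomial (expo G I) 1 := by
  classical
  unfold phi expo
  simp only [aeval_X]
  rw [show ∀ a b : (Sym2 (V × Bool) ⊕ (V × Bool)) →₀ ℕ,
    (monomial (a + b) (1 : ℂ)) = monomial a 1 * monomial b 1 from fun a b => by
      rw [monomial_mul, one_mul]]
  rw [monomial_sum_one, monomial_sum_one]
  rfl

/-- The exponent map. -/
noncomputable def Phi {V : Type} [Fintype V] [DecidableEq V] (G : SimpleGraph V) :
    ((V → Bool) →₀ ℕ) →+ ((Sym2 (V × Bool) ⊕ (V × Bool)) →₀ ℕ) :=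
  Finsupp.liftAddHom fun I => multiplesHom _ (expo G I)

theorem Phi_single {V : Type} [Fintype V] [DecidableEq V] (G : SimpleGraph V) (I : V → Bool)
    (n : ℕ) : Phi G (Finsupp.single I n) = n • expo G I := by
  simp [Phi]

theorem phi_monomial {V : Type} [Fintype V] [DecidableEq V] (G : SimpleGraph V)
    (d : (V → Bool) →₀ ℕ) (c : ℂ) :
    phi G (monomial d c) = monomial (Phi G d) c := by
  induction d using Finsupp.induction generalizing c with
  | zero =>
    rw [map_zero, ← C_apply, ← C_apply, ← algebraMap_eq, AlgHom.commutes]; rfl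
  | single_add a b f _ _ ih =>
    have : monomial (Finsupp.single a b + f) c = X a ^ b * monomial f c := by
      rw [X_pow_eq_monomial, monomial_mul, one_mul]
    rw [this, map_mul, map_pow, phi_X_s15, ih, map_add, Phi_single, monomial_pow, monomial_mul]
    simp

/-- The degree of each exponent vector. -/
noncomputable def degN {V : Type} [Fintype V] [DecidableEq V] (G : SimpleGraph V) : ℕ := by
  letI : DecidableRel G.Adj := Classical.decRel _
  exact G.edgeFinset.card + (univ.filter (fun l : V => ∀ k, ¬ G.Adj l k)).card

theorem degree_expo {V : Type} [Fintype V] [DecidableEq V] (G : SimpleGraph V) (I : V → Bool) :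
    (expo G I).degree = degN G := by
  unfold expo degN
  simp only [map_add, map_sum, Finsupp.degree_single]
  simp

theorem degN_pos {V : Type} [Fintype V] [DecidableEq V] [Nonempty V] (G : SimpleGraph V) :
    0 < degN G := by
  classical
  obtain ⟨v⟩ := ‹Nonempty V›
  unfold degN
  by_cases h : ∀ k, ¬ G.Adj v k
  · apply Nat.add_pos_right
    exact Finset.card_pos.2 ⟨v, by simpa using h⟩
  · push Not at h
    obtain ⟨k, hk⟩ := h
    apply Nat.add_pos_left
    exact Finset.card_pos.2 ⟨s(v, k), by simpa using hk⟩

theorem degree_Phi {V : Type} [Fintype V] [DecidableEq V] (G : SimpleGraph V)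
    (d : (V → Bool) →₀ ℕ) : (Phi G d).degree = d.degree * degN G := by
  induction d using Finsupp.induction with
  | zero => simp
  | single_add a b f _ _ ih =>
    rw [map_add, map_add, map_add, ih, Phi_single, map_nsmul, degree_expo, Finsupp.degree_single,
      add_mul, smul_eq_mul]

theorem expo_inr {V : Type} [Fintype V] [DecidableEq V] (G : SimpleGraph V) (I : V → Bool)
    (v : V) (hv : ∀ k, ¬ G.Adj v k) (a : Bool) :
    expo G I (Sum.inr (v, a)) = if I v = a then 1 else 0 := by
  classical
  unfold expo
  simp only [Finsupp.add_apply, Finsupp.finsetSum_apply, Finsupp.single_apply]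
  rw [Finset.sum_eq_zero (by simp), zero_add, Finset.sum_eq_single v]
  · simp
  · intro b _ hb; simp [hb]
  · intro h; simp at h; obtain ⟨k, hk⟩ := h; exact absurd hk (hv k)

theorem expo_inl {V : Type} [Fintype V] [DecidableEq V] (G : SimpleGraph V) (I : V → Bool)
    (v w : V) (hv : G.Adj v w) (a b : Bool) :
    expo G I (Sum.inl s((v, a), (w, b))) = if I v = a ∧ I w = b then 1 else 0 := by
  classical
  unfold expo
  simp only [Finsupp.add_apply, Finsupp.finsetSum_apply, Finsupp.single_apply]
  rw [add_comm, Finset.sum_eq_zero (by simp), zero_add, Finset.sum_eq_single s(v, w)]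
  · have := hv.ne
    have := hv.ne'
    simp only [Sym2.map_mk, Sum.inl.injEq, Sym2.eq_iff, Prod.mk.injEq]
    congr 1
    simp [*]
  · intro e _ he
    rw [if_neg]
    intro h
    apply he
    have h2 := congrArg (Sym2.map Prod.fst) (Sum.inl.inj h)
    rw [Sym2.map_map] at h2
    simpa using h2
  · intro h; simp at h; exact absurd hv h

/-- Colour class indicator. -/
def cls {V : Type} (C : V → Fin 3) (j : Fin 3) : V → Bool := fun v => decide (C v = j)

/-- Exponent of the cubic monomial of a triple of index strings. -/
noncomputable def trip {V : Type} (I : Fin 3 → V → Bool) : (V → Bool) →₀ ℕ :=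
  ∑ j, Finsupp.single (I j) 1

theorem Phi_trip {V : Type} [Fintype V] [DecidableEq V] (G : SimpleGraph V)
    (I : Fin 3 → V → Bool) : Phi G (trip I) = ∑ j, expo G (I j) := by
  simp [trip, Phi_single]

theorem prod_X_trip {V : Type} (I : Fin 3 → V → Bool) :
    (∏ j, X (I j) : MvPolynomial (V → Bool) ℂ) = monomial (trip I) 1 := by
  classical
  rw [trip, monomial_sum_one]; rfl

theorem triple_sum_two {M : Type} [AddCommMonoid M] (g : Bool → Bool → M) :
    ∀ x y : Fin 3, x ≠ y → ∑ j, g (decide (x = j)) (decide (y = j)) =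
      g true false + g false true + g false false := by
  intro x y h
  fin_cases x <;> fin_cases y <;> simp [Fin.sum_univ_three] at h ⊢ <;> abel

theorem triple_sum_one {M : Type} [AddCommMonoid M] (g : Bool → M) :
    ∀ x : Fin 3, ∑ j, g (decide (x = j)) = g true + g false + g false := by
  intro x
  fin_cases x <;> simp [Fin.sum_univ_three] <;> abel

theorem Phi_coloring {V : Type} [Fintype V] [DecidableEq V] (G : SimpleGraph V)
    (C C' : V → Fin 3) (hC : ProperColoring G C) (hC' : ProperColoring G C') :
    Phi G (trip (cls C)) = Phi G (trip (cls C')) := by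
  classical
  rw [Phi_trip, Phi_trip]
  unfold expo
  simp only [Finset.sum_add_distrib]
  congr 1
  · rw [Finset.sum_comm]
    conv_rhs => rw [Finset.sum_comm]
    refine Finset.sum_congr rfl fun e he => ?_
    induction e using Sym2.ind with
    | _ u v =>
      have huv : G.Adj u v := by simpa using he
      have h1 := triple_sum_two (fun a b => (Finsupp.single (Sum.inl s((u, a), (v, b))) 1 :
        (Sym2 (V × Bool) ⊕ (V × Bool)) →₀ ℕ))
      exact (h1 _ _ (hC u v huv)).trans (h1 _ _ (hC' u v huv)).symm
  · rw [Finset.sum_comm]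
    conv_rhs => rw [Finset.sum_comm]
    refine Finset.sum_congr rfl fun l _ => ?_
    have h1 := triple_sum_one (fun a => (Finsupp.single (Sum.inr (l, a)) 1 :
        (Sym2 (V × Bool) ⊕ (V × Bool)) →₀ ℕ))
    exact (h1 _).trans (h1 _).symm

theorem exists_coloring {V : Type} [Fintype V] [DecidableEq V] (G : SimpleGraph V)
    (C : V → Fin 3) (hC : ProperColoring G C) (I : Fin 3 → V → Bool)
    (h : Phi G (trip I) = Phi G (trip (cls C))) :
    ∃ C', ProperColoring G C' ∧ I = cls C' := by
  classical
  rw [Phi_trip, Phi_trip] at h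
  have hsum : ∀ v, (∑ j, if I j v = true then 1 else 0) = 1 := by
    intro v
    have key : (∑ j, if I j v = true then 1 else 0) = ∑ j, if cls C j v = true then 1 else 0 := by
      by_cases hv : ∀ k, ¬ G.Adj v k
      · have := DFunLike.congr_fun h (Sum.inr (v, true))
        simpa only [Finsupp.finsetSum_apply, expo_inr G _ v hv] using this
      · push Not at hv
        obtain ⟨w, hw⟩ := hv
        have h1 := DFunLike.congr_fun h (Sum.inl s((v, true), (w, true)))
        have h2 := DFunLike.congr_fun h (Sum.inl s((v, true), (w, false)))
        simp only [Finsupp.finsetSum_apply, expo_inl G _ v w hw] at h1 h2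
        have h3 := congrArg₂ (· + ·) h1 h2
        simp only [← Finset.sum_add_distrib] at h3
        have h4 : ∀ J : V → Bool, (if J v = true then 1 else 0) =
          (if J v = true ∧ J w = true then 1 else 0) +
          (if J v = true ∧ J w = false then 1 else 0) := by
          intro J; cases J v <;> cases J w <;> simp
        simp only [h4]
        exact h3
    rw [key]
    simp [cls]
  have hex : ∀ v, ∃ c : Fin 3, ∀ j, I j v = decide (c = j) := by
    intro v
    have := hsum v
    rw [Fin.sum_univ_three] at this
    by_cases h0 : I 0 v = true <;> by_cases h1 : I 1 v = true <;>
      by_cases h2 : I 2 v = true <;> simp [h0, h1, h2] at this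
    · refine ⟨0, fun j => ?_⟩; fin_cases j <;> simp [h0, h1, h2]
    · refine ⟨1, fun j => ?_⟩; fin_cases j <;> simp [h0, h1, h2]
    · refine ⟨2, fun j => ?_⟩; fin_cases j <;> simp [h0, h1, h2]
  choose C' hC' using hex
  refine ⟨C', ?_, ?_⟩
  · intro u v huv heq
    have h1 := DFunLike.congr_fun h (Sum.inl s((u, true), (v, true)))
    simp only [Finsupp.finsetSum_apply, expo_inl G _ u v huv] at h1
    have h2 : (∑ j, if cls C j u = true ∧ cls C j v = true then 1 else 0) = 0 := by
      apply Finset.sum_eq_zero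
      intro j _
      rw [if_neg]
      simp only [cls, decide_eq_true_eq]
      rintro ⟨rfl, h'⟩
      exact hC u v huv h'.symm
    rw [h2, Finset.sum_eq_zero_iff] at h1
    have := h1 (C' u) (Finset.mem_univ _)
    simp [hC', heq] at this
  · funext j v
    exact hC' v j

theorem two_colors {a b c d i : Fin 3} (h1 : a ≠ i) (h2 : b ≠ i) (h3 : c ≠ i) (h4 : d ≠ i)
    (hab : a ≠ b) (hcd : c ≠ d) (h : c ≠ a) : d ≠ b := by
  omega

theorem kempe {V : Type} [Fintype V] [DecidableEq V] (H : SimpleGraph V) (i : Fin 3)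
    (C' : V → Fin 3) (hC' : ProperColoring H C') (n : ℕ) :
    ∀ C : V → Fin 3, ProperColoring H C → (∀ v, C v = i ↔ C' v = i) →
      (univ.filter fun v => C v ≠ C' v).card ≤ n → Relation.ReflTransGen (ColoringStep H) C C' := by
  classical
  induction n with
  | zero =>
    intro C hC hi hn
    have : C = C' := by
      funext v
      by_contra hv
      have : v ∈ univ.filter fun v => C v ≠ C' v := by simpa using hv
      rw [Nat.le_zero, Finset.card_eq_zero] at hn
      rw [hn] at this
      simp at this
    rw [this]
  | succ n ih =>
    intro C hC hi hn
    by_cases hex : ∃ v, C v ≠ C' v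
    swap
    · push Not at hex
      rw [funext hex]
    obtain ⟨v0, hv0⟩ := hex
    have hv0i : C v0 ≠ i := fun h => hv0 (h.trans ((hi v0).1 h).symm)
    let Γ := H.induce {v : V | C v ≠ i}
    let K := Γ.connectedComponentMk ⟨v0, hv0i⟩
    let S : Set V := {v | ∃ h : C v ≠ i, Γ.connectedComponentMk ⟨v, h⟩ = K}
    let C1 : V → Fin 3 := fun v => if v ∈ S then C' v else C v
    have hSflip : ∀ v ∈ S, C' v ≠ C v := by
      rintro v ⟨h, hK⟩
      have hr : Γ.Reachable ⟨v0, hv0i⟩ ⟨v, h⟩ :=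
        (SimpleGraph.ConnectedComponent.exact hK).symm
      have gen : ∀ x y : {v : V | C v ≠ i}, Γ.Walk x y → C' x.1 ≠ C x.1 → C' y.1 ≠ C y.1 := by
        intro x y p
        induction p with
        | nil => exact id
        | @cons a b c hab _ ih2 =>
          intro hx
          apply ih2
          have hadj : H.Adj a.1 b.1 := hab
          exact two_colors (i := i) a.2 b.2 (fun h => a.2 ((hi _).2 h)) (fun h => b.2 ((hi _).2 h))
            (hC _ _ hadj) (hC' _ _ hadj) hx
      obtain ⟨p⟩ := hr
      exact gen _ _ p (Ne.symm hv0)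
    have hSi : ∀ v ∈ S, C' v ≠ i := fun v hv h => hv.1 ((hi v).2 h)
    have hSadj : ∀ u v, H.Adj u v → u ∈ S → C v ≠ i → v ∈ S := by
      rintro u v huv ⟨h, hK⟩ hv
      refine ⟨hv, ?_⟩
      rw [← hK]
      apply SimpleGraph.ConnectedComponent.sound
      apply SimpleGraph.Adj.reachable
      exact huv.symm
    have hC1 : ProperColoring H C1 := by
      intro u v huv
      simp only [C1]
      by_cases hu : u ∈ S <;> by_cases hv : v ∈ S <;> simp only [hu, hv, if_true, if_false]
      · exact hC' u v huv
      · have : C v = i := by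
          by_contra h; exact hv (hSadj u v huv hu h)
        rw [this]; exact hSi u hu
      · have : C u = i := by
          by_contra h; exact hu (hSadj v u huv.symm hv h)
        rw [this]; exact (hSi v hv).symm
      · exact hC u v huv
    have hmove : ColoringMove H C C1 := by
      refine ⟨i, K, ?_, ?_⟩
      · intro v
        constructor
        · intro hv
          have : v.1 ∈ S := ⟨v.2, hv⟩
          simp only [C1, this, if_true]
          exact ⟨hSflip _ this, hSi _ this⟩
        · intro hv
          have : v.1 ∉ S := fun h => hv h.2
          simp only [C1, this, if_false]
      · intro v hv
        have : v ∉ S := fun h => h.1 hv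
        simp only [C1, this, if_false]
    refine Relation.ReflTransGen.head ⟨hC, hC1, Or.inl hmove⟩ (ih C1 hC1 ?_ ?_)
    · intro v
      simp only [C1]
      split_ifs
      · rfl
      · exact hi v
    · apply Nat.le_of_lt_succ
      refine lt_of_lt_of_le (Finset.card_lt_card ?_) hn
      rw [Finset.ssubset_iff_of_subset]
      · refine ⟨v0, by simpa using hv0, ?_⟩
        have : v0 ∈ S := ⟨hv0i, rfl⟩
        simp [C1, this]
      · intro v
        simp only [Finset.mem_filter, C1]
        split_ifs
        · simp
        · exact id

theorem kempe' {V : Type} [Fintype V] [DecidableEq V] (H : SimpleGraph V) (i : Fin 3)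
    (C C' : V → Fin 3) (hC : ProperColoring H C) (hC' : ProperColoring H C')
    (h : cls C i = cls C' i) : Relation.ReflTransGen (ColoringStep H) C C' := by
  refine kempe H i C' hC' _ C hC (fun v => ?_) le_rfl
  simpa [cls] using congrFun h v

theorem trip_pos {V : Type} (I : Fin 3 → V → Bool) (J : V → Bool) (h : trip I J ≠ 0) :
    ∃ i, I i = J := by
  classical
  by_contra hc
  push Not at hc
  apply h
  simp [trip, Finsupp.finsetSum_apply, Finsupp.single_apply, hc]

theorem trip_self {V : Type} (I : Fin 3 → V → Bool) (i : Fin 3) : trip I (I i) ≠ 0 := by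
  classical
  simp only [trip, Finsupp.finsetSum_apply, Finsupp.single_apply]
  intro h
  rw [Finset.sum_eq_zero_iff] at h
  simpa using h i (Finset.mem_univ _)

theorem same_monomial {V : Type} [Fintype V] [DecidableEq V] (H : SimpleGraph V)
    (C C' : V → Fin 3) (hC : ProperColoring H C) (hC' : ProperColoring H C')
    (h : trip (cls C) = trip (cls C')) : Relation.ReflTransGen (ColoringStep H) C C' := by
  obtain ⟨i, hi⟩ := trip_pos (cls C) (cls C' 0) (by rw [h]; exact trip_self _ _)
  let C1 : V → Fin 3 := fun v => Equiv.swap 0 i (C v)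
  have hC1 : ProperColoring H C1 := fun u v huv heq => hC u v huv ((Equiv.swap 0 i).injective heq)
  have h1 : ∃ k, cls C k = cls C1 k := by
    have : ∀ i : Fin 3, ∃ k : Fin 3, ∀ x, x = k ↔ Equiv.swap 0 i x = k := by decide
    obtain ⟨k, hk⟩ := this i
    refine ⟨k, ?_⟩
    funext v
    simp only [cls, C1]
    exact decide_eq_decide.2 (hk _)
  obtain ⟨k, hk⟩ := h1
  refine (kempe' H k C C1 hC hC1 hk).trans (kempe' H 0 C1 C' hC1 hC' ?_)
  rw [← hi]
  have : ∀ i x : Fin 3, Equiv.swap 0 i x = 0 ↔ x = i := by decide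
  funext v
  simp only [cls, C1]
  exact decide_eq_decide.2 (this _ _)

theorem degree_trip {V : Type} (I : Fin 3 → V → Bool) : (trip I).degree = 3 := by
  simp [trip]

theorem exists_single {σ : Type} (d : σ →₀ ℕ) (n : ℕ) (h : d.degree = n + 1) :
    ∃ a d', d = Finsupp.single a 1 + d' ∧ d'.degree = n := by
  classical
  have : d ≠ 0 := by rintro rfl; simp at h
  obtain ⟨a, ha⟩ := Finsupp.ne_iff.1 this
  have hle : Finsupp.single a 1 ≤ d := by
    rw [Finsupp.single_le_iff]; exact Nat.one_le_iff_ne_zero.2 ha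
  refine ⟨a, d - Finsupp.single a 1, (add_tsub_cancel_of_le hle).symm, ?_⟩
  have h2 := congrArg Finsupp.degree (add_tsub_cancel_of_le hle)
  rw [map_add, Finsupp.degree_single, h] at h2
  omega

theorem exists_trip {V : Type} (J : V → Bool) (D : (V → Bool) →₀ ℕ) (h : D.degree = 2)
    (i : Fin 3) : ∃ I : Fin 3 → V → Bool, I i = J ∧ Finsupp.single J 1 + D = trip I := by
  obtain ⟨a, D1, rfl, h1⟩ := exists_single D 1 h
  obtain ⟨b, D2, rfl, h2⟩ := exists_single D1 0 h1
  have : D2 = 0 := (Finsupp.degree_eq_zero_iff D2).1 h2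
  subst this
  fin_cases i
  · refine ⟨![J, a, b], rfl, ?_⟩
    simp [trip, Fin.sum_univ_three]; abel
  · refine ⟨![a, J, b], rfl, ?_⟩
    simp [trip, Fin.sum_univ_three]; abel
  · refine ⟨![a, b, J], rfl, ?_⟩
    simp [trip, Fin.sum_univ_three]; abel

/-- Exponents of monomials of colorings connected to `C0`. -/
def reachSet {V : Type} (H : SimpleGraph V) (C0 : V → Fin 3) : Set ((V → Bool) →₀ ℕ) :=
  {d | ∃ C, ProperColoring H C ∧ Relation.ReflTransGen (ColoringStep H) C0 C ∧ d = trip (cls C)}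

theorem reach_inv {V : Type} [Fintype V] [DecidableEq V] [Nonempty V] (H : SimpleGraph V)
    (C0 : V → Fin 3) (m d d' : (V → Bool) →₀ ℕ) (hd : d.degree ≤ 2)
    (hP : Phi H d = Phi H d') (h : m + d ∈ reachSet H C0) : m + d' ∈ reachSet H C0 := by
  classical
  obtain ⟨C, hC, hr, he⟩ := h
  have hdeg : d.degree = d'.degree := by
    have := congrArg Finsupp.degree hP
    rw [degree_Phi, degree_Phi] at this
    exact Nat.eq_of_mul_eq_mul_right (degN_pos H) this
  have h3 : m.degree + d.degree = 3 := by
    rw [← map_add, he, degree_trip]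
  obtain ⟨k, hk⟩ : ∃ k, m.degree = k + 1 := ⟨m.degree - 1, by omega⟩
  obtain ⟨J, m', rfl, hm'⟩ := exists_single m k hk
  obtain ⟨i, hi⟩ := trip_pos (cls C) J (by rw [← he]; simp)
  obtain ⟨I, hI, hI2⟩ := exists_trip J (m' + d') (by rw [map_add]; omega) i
  rw [← add_assoc] at hI2
  have hPP : Phi H (trip I) = Phi H (trip (cls C)) := by
    rw [← hI2, ← he, map_add, map_add _ _ d, hP]
  obtain ⟨C', hC', rfl⟩ := exists_coloring H C hC I hPP
  exact ⟨C', hC', hr.trans (kempe' H i C C' hC hC' (hi.trans hI.symm)), hI2⟩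

/-- The linear functional summing the coefficients of monomials in `S`. -/
noncomputable def ind {σ : Type} (S : Set (σ →₀ ℕ)) : MvPolynomial σ ℂ →ₗ[ℂ] ℂ := by
  classical
  exact (basisMonomials σ ℂ).constr ℂ (fun d => if d ∈ S then 1 else 0)

open Classical in
theorem ind_monomial {σ : Type} (S : Set (σ →₀ ℕ)) (d : σ →₀ ℕ) (c : ℂ) :
    ind S (monomial d c) = if d ∈ S then c else 0 := by
  have h : monomial d c = c • (basisMonomials σ ℂ d) := by
    simp [smul_monomial]
  rw [h, map_smul, ind, Module.Basis.constr_basis]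
  split_ifs <;> simp

theorem ind_gen {V : Type} [Fintype V] [DecidableEq V] [Nonempty V] (H : SimpleGraph V)
    (C0 : V → Fin 3) (q : MvPolynomial (V → Bool) ℂ) (hq : q ∈ toricIdeal H)
    (hdeg : q.totalDegree ≤ 2) (p : MvPolynomial (V → Bool) ℂ) :
    ind (reachSet H C0) (p * q) = 0 := by
  classical
  induction p using MvPolynomial.induction_on' with
  | add p1 p2 h1 h2 => rw [add_mul, map_add, h1, h2, add_zero]
  | monomial m c =>
    have hq0 : phi H q = 0 := hq
    let T : Set ((Sym2 (V × Bool) ⊕ (V × Bool)) →₀ ℕ) :=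
      {t | ∃ d, Finsupp.degree d ≤ 2 ∧ m + d ∈ reachSet H C0 ∧ Phi H d = t}
    have h0 : c * ind T (phi H q) = 0 := by rw [hq0, map_zero, mul_zero]
    rw [← h0]
    conv_lhs => rw [q.as_sum]
    conv_rhs => rw [q.as_sum]
    rw [Finset.mul_sum, map_sum, map_sum, map_sum, Finset.mul_sum]
    refine Finset.sum_congr rfl fun d hd => ?_
    rw [monomial_mul, phi_monomial, ind_monomial, ind_monomial]
    have hd2 : d.degree ≤ 2 := (le_totalDegree hd).trans hdeg
    have : m + d ∈ reachSet H C0 ↔ Phi H d ∈ T := by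
      constructor
      · intro h; exact ⟨d, hd2, h, rfl⟩
      · rintro ⟨d', h1, h2, h3⟩
        exact reach_inv H C0 m d' d h1 h3 h2
    simp only [this]
    split_ifs <;> simp

theorem step_class {V : Type} (H : SimpleGraph V) (C C' : V → Fin 3) (h : ColoringMove H C C') :
    ∃ i, cls C i = cls C' i := by
  obtain ⟨i, K, h1, h2⟩ := h
  refine ⟨i, ?_⟩
  funext v
  simp only [cls]
  apply decide_eq_decide.2
  constructor
  · intro hv; rw [h2 v hv, hv]
  · intro hv
    by_contra hne
    have := h1 ⟨v, hne⟩
    by_cases hk : (H.induce {v : V | C v ≠ i}).connectedComponentMk ⟨v, hne⟩ = K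
    · exact (this.1 hk).2 hv
    · exact hne ((this.2 hk).symm.trans hv)

theorem mem_toric {V : Type} [Fintype V] [DecidableEq V] (H : SimpleGraph V)
    (C C' : V → Fin 3) (hC : ProperColoring H C) (hC' : ProperColoring H C') :
    (∏ j, X (cls C j) : MvPolynomial (V → Bool) ℂ) - ∏ j, X (cls C' j) ∈ toricIdeal H := by
  change phi H _ = 0
  rw [prod_X_trip, prod_X_trip, map_sub, phi_monomial, phi_monomial, Phi_coloring H C C' hC hC',
    sub_self]

theorem factor_prod {R : Type} [CommRing R] (a b : Fin 3 → R) (i : Fin 3) (h : a i = b i) :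
    (∏ j, a j) - ∏ j, b j = a i * (a (i + 1) * a (i + 2) - b (i + 1) * b (i + 2)) := by
  fin_cases i <;> simp [Fin.prod_univ_three] at h ⊢ <;> rw [← h] <;> ring

theorem class_mem_span {V : Type} [Fintype V] [DecidableEq V] (H : SimpleGraph V)
    (C C' : V → Fin 3) (hC : ProperColoring H C) (hC' : ProperColoring H C') (i : Fin 3)
    (h : cls C i = cls C' i) :
    (∏ j, X (cls C j) : MvPolynomial (V → Bool) ℂ) - ∏ j, X (cls C' j) ∈
      Ideal.span {g : MvPolynomial (V → Bool) ℂ | g ∈ toricIdeal H ∧ g.totalDegree = 2} := by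
  have h0 := mem_toric H C C' hC hC'
  rw [factor_prod (fun j => X (cls C j)) (fun j => X (cls C' j)) i (by simp only [h])] at h0 ⊢
  apply Ideal.mul_mem_left
  set q : MvPolynomial (V → Bool) ℂ :=
    X (cls C (i + 1)) * X (cls C (i + 2)) - X (cls C' (i + 1)) * X (cls C' (i + 2)) with hq
  by_cases hq0 : q = 0
  · rw [hq0]; exact Ideal.zero_mem _
  apply Ideal.subset_span
  constructor
  · change phi H q = 0
    change phi H (_ * q) = 0 at h0
    rw [map_mul] at h0
    refine (mul_eq_zero.1 h0).resolve_left ?_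
    rw [phi_X_s15]
    simp
  · refine IsHomogeneous.totalDegree (n := 2) ?_ hq0
    exact ((isHomogeneous_X ℂ _).mul (isHomogeneous_X ℂ _)).sub
      ((isHomogeneous_X ℂ _).mul (isHomogeneous_X ℂ _))

/-- for proper 3-colorings `C_A`, `C_B` of `H`, the associated cubic binomial
`f = p_{a₁} p_{a₂} p_{a₃} - p_{b₁} p_{b₂} p_{b₃}` lies in `I_H`, and `f` lies in the ideal
generated by the quadratic elements of `I_H` iff `C_A` and `C_B` lie in the same connected
component of the 3-coloring graph `C₃(H)`. -/
theorem cubic_binomial_coloring {V : Type} [Fintype V] [DecidableEq V]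
    (H : SimpleGraph V) (CA CB : V → Fin 3)
    (hCA : ProperColoring H CA) (hCB : ProperColoring H CB)
    (f : MvPolynomial (V → Bool) ℂ)
    (hf : f = (∏ j : Fin 3, X (fun v : V => decide (CA v = j))) -
        ∏ j : Fin 3, X (fun v : V => decide (CB v = j))) :
    f ∈ toricIdeal H ∧
    (f ∈ Ideal.span {g : MvPolynomial (V → Bool) ℂ |
        g ∈ toricIdeal H ∧ g.totalDegree = 2} ↔
      Relation.ReflTransGen (ColoringStep H) CA CB) := by
  classical
  have hf' : f = (∏ j, X (cls CA j)) - ∏ j, X (cls CB j) := hf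
  clear hf
  subst hf'
  refine ⟨mem_toric H CA CB hCA hCB, ?_, ?_⟩
  · intro hspan
    rcases isEmpty_or_nonempty V with hV | hV
    · rw [Subsingleton.elim CA CB]
    have key : ∀ g ∈ Ideal.span {g : MvPolynomial (V → Bool) ℂ |
        g ∈ toricIdeal H ∧ g.totalDegree = 2}, ∀ p, ind (reachSet H CA) (p * g) = 0 := by
      intro g hg
      induction hg using Submodule.span_induction with
      | mem x hx => exact fun p => ind_gen H CA x hx.1 hx.2.le p
      | zero => simp
      | add x y _ _ hx hy => intro p; rw [mul_add, map_add, hx, hy, add_zero]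
      | smul a x _ hx => intro p; rw [smul_eq_mul, ← mul_assoc]; exact hx _
    have h1 := key _ hspan 1
    rw [one_mul, prod_X_trip, prod_X_trip, map_sub, ind_monomial, ind_monomial,
      if_pos ⟨CA, hCA, Relation.ReflTransGen.refl, rfl⟩] at h1
    by_cases hB : trip (cls CB) ∈ reachSet H CA
    · obtain ⟨C, hC, hr, he⟩ := hB
      exact hr.trans (same_monomial H C CB hC hCB he.symm)
    · rw [if_neg hB] at h1
      simp at h1
  · intro hr
    clear hCB
    induction hr with
    | refl => rw [sub_self]; exact Ideal.zero_mem _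
    | @tail C C' _ hs ih =>
      obtain ⟨h1, h2, h3⟩ := hs
      rw [← sub_add_sub_cancel _ (∏ j, X (cls C j))]
      refine Ideal.add_mem _ ih ?_
      obtain ⟨i, hi⟩ : ∃ i, cls C i = cls C' i := by
        rcases h3 with h3 | h3
        · exact step_class H _ _ h3
        · obtain ⟨i, hi⟩ := step_class H _ _ h3
          exact ⟨i, hi.symm⟩
      exact class_mem_span H C C' h1 h2 i hi

end BinaryGraphModels
end
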